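/- arXiv:0806.3377 — 3 statements merged into one kernel-verified Lean document; each statement's English description precedes it below -/
import Mathlib

section
/- If B = Σ_{j,k=1}^d D_j(b_jk(x) D_k) is a differential operator of div-grad type and A = (x·∇ + ∇·x)/(2i) is the generator of dilations, then the commutator i[B, A] is again of div-grad type; more precisely i[B, A] = Σ_{j,k=1}^d D_j( 2 b_jk(x) - (x·∇ b_jk)(x) ) D_k. -/
open MeasureTheory Filter Topology Complex
open scoped Real ENNReal FourierTransform ComplexConjugate

noncomputable section

/-- Euclidean space `ℝ^d`. -/
abbrev Ed (d : ℕ) : Type := EuclideanSpace ℝ (Fin d)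

/-- `L²(ℝ^d)` with complex values. -/
abbrev L2 (d : ℕ) := MeasureTheory.Lp ℂ 2 (volume : Measure (Ed d))

/-- The partial derivative `∂_j u`. -/
def pd (d : ℕ) (j : Fin d) (u : Ed d → ℂ) : Ed d → ℂ :=
  fun x => fderiv ℝ u x (EuclideanSpace.single j (1:ℝ))

/-- The operator `∑_{j,k} D_j (b_{jk} D_k) = - ∑_{j,k} ∂_j (b_{jk} ∂_k)` (complex
coefficients), applied to a function `u`. -/
def divGradC (d : ℕ) (b : Ed d → Fin d → Fin d → ℂ) (u : Ed d → ℂ) : Ed d → ℂ :=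
  fun x => -∑ j : Fin d, ∑ k : Fin d,
    fderiv ℝ (fun y => b y j k * fderiv ℝ u y (EuclideanSpace.single k (1:ℝ))) x
      (EuclideanSpace.single j (1:ℝ))

/-- `- div (G ∇ u) = ∑_{j,k} D_j (G_{jk} D_k) u` for a real coefficient matrix `G`. -/
def divGrad (d : ℕ) (G : Ed d → Fin d → Fin d → ℝ) (u : Ed d → ℂ) : Ed d → ℂ :=
  divGradC d (fun x j k => (G x j k : ℂ)) u

/-- The operation `a ↦ x·∇a` on real valued functions. -/
def xdotOp (d : ℕ) : (Ed d → ℝ) → Ed d → ℝ := fun a x => fderiv ℝ a x x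

/-- The operation `a ↦ x·∇a` on complex valued functions. -/
def xdotC (d : ℕ) : (Ed d → ℂ) → Ed d → ℂ := fun a x => fderiv ℝ a x x

/-- `a ∈ C_b^∞(ℝ^d)`: smooth with all derivatives bounded. -/
def CbSmooth (d : ℕ) (a : Ed d → ℝ) : Prop :=
  ContDiff ℝ (⊤ : ℕ∞) a ∧ ∀ n : ℕ, ∃ C : ℝ, ∀ x, ‖iteratedFDeriv ℝ n a x‖ ≤ C

/-- `a ∈ S_dil(ℝ^d)` : `a ∈ C_b^∞` and `(x·∇)^n a ∈ L^∞` for all `n`. -/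
def MemSdil (d : ℕ) (a : Ed d → ℝ) : Prop :=
  CbSmooth d a ∧ ∀ n : ℕ, ∃ C : ℝ, ∀ x, |(xdotOp d)^[n] a x| ≤ C

/-- Complex-valued version of `S_dil(ℝ^d)`. -/
def MemSdilC (d : ℕ) (a : Ed d → ℂ) : Prop :=
  (ContDiff ℝ (⊤ : ℕ∞) a ∧ ∀ n : ℕ, ∃ C : ℝ, ∀ x, ‖iteratedFDeriv ℝ n a x‖ ≤ C) ∧
  ∀ n : ℕ, ∃ C : ℝ, ∀ x, ‖(xdotC d)^[n] a x‖ ≤ C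

/-- The coefficient matrix is symmetric with real entries. -/
def SymmetricCoef (d : ℕ) (G : Ed d → Fin d → Fin d → ℝ) : Prop := ∀ x j k, G x j k = G x k j

/-- Uniform ellipticity: `Λ₊ ≥ G(x) ≥ Λ₋ > 0` as quadratic forms. -/
def UniformlyElliptic (d : ℕ) (G : Ed d → Fin d → Fin d → ℝ) : Prop :=
  ∃ lam Lam : ℝ, 0 < lam ∧ ∀ (x : Ed d) (v : Fin d → ℝ),
    lam * ∑ j, v j ^ 2 ≤ (∑ j, ∑ k, G x j k * v j * v k) ∧
      (∑ j, ∑ k, G x j k * v j * v k) ≤ Lam * ∑ j, v j ^ 2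

/-- The standing assumptions of the paper: `G` symmetric with entries in `C_b^∞`,
uniformly elliptic. -/
def Standing (d : ℕ) (G : Ed d → Fin d → Fin d → ℝ) : Prop :=
  (∀ j k, CbSmooth d fun x => G x j k) ∧ SymmetricCoef d G ∧ UniformlyElliptic d G

/-- `G = I_d + H`. -/
def Gmat (d : ℕ) (H : Ed d → Fin d → Fin d → ℝ) : Ed d → Fin d → Fin d → ℝ :=
  fun x j k => (if j = k then 1 else 0) + H x j k

/-- Long range condition `|∂^α (G - I_d)| ≤ C_α ⟨x⟩^{-μ-|α|}`. -/
def LongRange (d : ℕ) (G : Ed d → Fin d → Fin d → ℝ) (μ : ℝ) : Prop :=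
  ∀ (j k : Fin d) (n : ℕ), ∃ C : ℝ, ∀ x : Ed d,
    ‖iteratedFDeriv ℝ n (fun y => G y j k - if j = k then (1:ℝ) else 0) x‖
      ≤ C * ((1 + ‖x‖ ^ 2) ^ (-(μ + n) / 2) : ℝ)

/-- `R` is the resolvent `(P - z)⁻¹` of the self-adjoint realization of
`P = - div (G ∇·)`: for every `f ∈ L²`, `g = R f` solves `(P - z) g = f` in the sense
of distributions (this characterizes the resolvent uniquely). -/
def IsWeakResolvent (d : ℕ) (G : Ed d → Fin d → Fin d → ℝ) (z : ℂ)
    (R : L2 d →L[ℂ] L2 d) : Prop :=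
  ∀ (f : L2 d) (φ : SchwartzMap (Ed d) ℂ),
    (∫ x, (R f) x * divGrad d G (⇑φ) x) - z * (∫ x, (R f) x * φ x) = ∫ x, f x * φ x

/-- The japanese bracket weight `⟨x⟩^s = (1+|x|²)^{s/2}`. -/
def jweight (d : ℕ) (s : ℝ) : Ed d → ℝ := fun x => (1 + ‖x‖ ^ 2) ^ (s / 2)

/-- The dilation group `(e^{itA} u)(x) = e^{td/2} u(e^t x)`, where
`A = (x·∇ + ∇·x)/(2i)` is the generator of dilations. -/
def dil (d : ℕ) (t : ℝ) (u : Ed d → ℂ) : Ed d → ℂ :=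
  fun x => (Real.exp (t * d / 2) : ℂ) * u (Real.exp t • x)

/-- The `L²` inner product of two functions (conjugate linear in the first variable,
as is Mathlib's convention). -/
def pairL2 (d : ℕ) (u v : Ed d → ℂ) : ℂ := ∫ x : Ed d, (starRingEnd ℂ) (u x) * v x

/-- The resolvent `(hA - z)⁻¹ = (1/i) ∫₀^{±∞} e^{-itz} e^{ithA} dt` (`± Im z < 0`) of the
(rescaled) generator of dilations, realized by its defining integral formula. -/
def resDil (d : ℕ) (h : ℝ) (z : ℂ) (u : Ed d → ℂ) : Ed d → ℂ := fun x =>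
  if z.im < 0 then
    Complex.I⁻¹ * ∫ t in Set.Ici (0:ℝ), Complex.exp (-(Complex.I * t * z)) * dil d (t * h) u x
  else
    -Complex.I⁻¹ * ∫ t in Set.Iic (0:ℝ), Complex.exp (-(Complex.I * t * z)) * dil d (t * h) u x

/-- `sin(τ A) u = (e^{iτA} - e^{-iτA}) u / (2i)`. -/
def sinA (d : ℕ) (τ : ℝ) (u : Ed d → ℂ) : Ed d → ℂ :=
  fun x => (dil d τ u x - dil d (-τ) u x) / (2 * Complex.I)

/-- `F(hA) = arctan(hA)` realized through `arctan λ = ∫₀^∞ sin(tλ) e^{-t} dt / t`. -/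
def arctanA (d : ℕ) (h : ℝ) (u : Ed d → ℂ) : Ed d → ℂ :=
  fun x => ∫ t in Set.Ioi (0:ℝ), ((Real.exp (-t) / t : ℝ) : ℂ) * sinA d (t * h) u x

/-- Coefficients of the commutator `i[P,A] = ∑ D_j (2G_{jk} - x·∇G_{jk}) D_k`. -/
def commCoef (d : ℕ) (G : Ed d → Fin d → Fin d → ℝ) : Ed d → Fin d → Fin d → ℝ :=
  fun x j k => 2 * G x j k - xdotOp d (fun y => G y j k) x

/-- `P_τ = e^{-iτA} (i[P,A]) e^{iτA}` applied to a function. -/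
def ptauFun (d : ℕ) (G : Ed d → Fin d → Fin d → ℝ) (τ : ℝ) (u : Ed d → ℂ) : Ed d → ℂ :=
  dil d (-τ) (divGrad d (commCoef d G) (dil d τ u))

/-- Coefficients of `P_τ = e^{-iτA} (i[P,A]) e^{iτA}` for `P = -div((I+H)∇)`;
indeed `e^{-iτA} (∑ D_j b D_k) e^{iτA} = e^{2τ} ∑ D_j b(e^{-τ}x) D_k`. -/
def ptauCoef (d : ℕ) (H : Ed d → Fin d → Fin d → ℝ) (τ : ℝ) : Ed d → Fin d → Fin d → ℝ :=
  fun x j k => Real.exp (2 * τ) * commCoef d (Gmat d H) (Real.exp (-τ) • x) j k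

/-- Coefficients of `Q_s = ∫₀¹ (d P_τ / dτ)|_{τ=σs} dσ`. -/
def qCoef (d : ℕ) (H : Ed d → Fin d → Fin d → ℝ) (s : ℝ) : Ed d → Fin d → Fin d → ℝ :=
  fun x j k => ∫ σ in (0:ℝ)..(1:ℝ), deriv (fun τ => ptauCoef d H τ x j k) (σ * s)

/-- Coefficients of `B_τ = τ ∫₀¹ s Q_{sτ} ds`. -/
def bCoef (d : ℕ) (H : Ed d → Fin d → Fin d → ℝ) (τ : ℝ) : Ed d → Fin d → Fin d → ℝ :=
  fun x j k => τ * ∫ s in (0:ℝ)..(1:ℝ), s * qCoef d H (s * τ) x j k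

/-- The Fourier multiplier `|D|` (with symbol `|ξ|`). -/
def absD (d : ℕ) (u : Ed d → ℂ) : Ed d → ℂ :=
  fun x => 𝓕⁻ (fun ξ : Ed d => (‖ξ‖ : ℂ) * 𝓕 u ξ) x

/-- `‖ |D| w ‖_{L²}`, computed on the Fourier side (Plancherel). -/
def Dnorm (d : ℕ) (w : Ed d → ℂ) : ℝ :=
  (eLpNorm (fun ξ : Ed d => (‖ξ‖ : ℂ) * 𝓕 w ξ) 2 volume).toReal

/-- A general Fourier multiplier `ρ(D)`. -/
def multD (d : ℕ) (ρ : Ed d → ℂ) (u : Ed d → ℂ) : Ed d → ℂ :=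
  fun x => 𝓕⁻ (fun ξ : Ed d => ρ ξ * 𝓕 u ξ) x

/-- The operator `A = (x·∇ + ∇·x)/(2i) = (x·∇ + d/2)/i` applied to a function. -/
def opA (d : ℕ) (u : Ed d → ℂ) : Ed d → ℂ :=
  fun x => (fderiv ℝ u x x + (d / 2 : ℂ) * u x) / Complex.I

/-- The functions `F_ν(λ) = ∫₀^∞ sin(tλ) t/(t²+ν²) e^{-t} dt` approximating `arctan`. -/
def Fnu (ν lam : ℝ) : ℝ :=
  ∫ t in Set.Ioi (0:ℝ), Real.sin (t * lam) * (t / (t ^ 2 + ν ^ 2)) * Real.exp (-t)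

/-- `m`-admissible family in `S_dil(ℝ^d)`:
`‖∂_τ^k (x·∇)^n b_τ‖_{L^∞} ≤ C_{kn} e^{m|τ|}` for all `k, n`. -/
def AdmissibleCoeff (d : ℕ) (m : ℕ) (b : ℝ → Ed d → ℂ) : Prop :=
  (∀ τ, MemSdilC d (b τ)) ∧
  (∀ (n : ℕ) (x : Ed d), ContDiff ℝ (⊤ : ℕ∞) fun τ => (xdotC d)^[n] (b τ) x) ∧
  ∀ k n : ℕ, ∃ C : ℝ, ∀ (τ : ℝ) (x : Ed d),
    ‖iteratedDeriv k (fun σ => (xdotC d)^[n] (b σ) x) τ‖ ≤ C * Real.exp (m * |τ|)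

/-- `m`-admissible family of differential operators `B_τ = ∑ D_j b_{jk,τ} D_k`. -/
def AdmissibleOp (d : ℕ) (m : ℕ) (B : ℝ → Ed d → Fin d → Fin d → ℂ) : Prop :=
  ∀ j k, AdmissibleCoeff d m fun τ x => B τ x j k

/-- Functions that are continuous and bounded on `[0,∞)` (the spectrum of `P`). -/
def GoodSymbol (φ : ℝ → ℂ) : Prop :=
  Continuous φ ∧ ∃ C : ℝ, ∀ lam : ℝ, 0 ≤ lam → ‖φ lam‖ ≤ C

/-- The (continuous bounded) functional calculus `φ ↦ φ(P)` of the nonnegative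
self-adjoint operator `P = -div(G∇)`, characterized by: it is linear and
multiplicative on continuous functions bounded on `[0,∞) ⊇ spec(P)`, compatible with
sup-norm bounds and adjoints, only depends on the restriction of the symbol to
`[0,∞)`, and sends `λ ↦ (λ - z)⁻¹` to the resolvent `(P - z)⁻¹`.  These properties
determine `φ(P)` uniquely for every `φ` continuous and vanishing at infinity.
Moreover `0` is not an eigenvalue of `P` (field `ker_triv`). -/
structure SpectralCalc (d : ℕ) (G : Ed d → Fin d → Fin d → ℝ) where
  map : (ℝ → ℂ) → (L2 d →L[ℂ] L2 d)
  map_congr : ∀ φ ψ, GoodSymbol φ → GoodSymbol ψ →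
    (∀ lam : ℝ, 0 ≤ lam → φ lam = ψ lam) → map φ = map ψ
  map_add : ∀ φ ψ, GoodSymbol φ → GoodSymbol ψ →
    map (fun lam => φ lam + ψ lam) = map φ + map ψ
  map_smul : ∀ (c : ℂ) φ, GoodSymbol φ → map (fun lam => c * φ lam) = c • map φ
  map_mul : ∀ φ ψ, GoodSymbol φ → GoodSymbol ψ →
    map (fun lam => φ lam * ψ lam) = (map φ).comp (map ψ)
  map_norm : ∀ (φ) (C : ℝ), (∀ lam : ℝ, 0 ≤ lam → ‖φ lam‖ ≤ C) → ‖map φ‖ ≤ C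
  map_star : ∀ φ, GoodSymbol φ →
    ContinuousLinearMap.adjoint (map φ) = map (fun lam => (starRingEnd ℂ) (φ lam))
  map_resolvent : ∀ z : ℂ, z.im ≠ 0 →
    IsWeakResolvent d G z (map fun lam => ((lam : ℂ) - z)⁻¹)
  ker_triv : ∀ f : L2 d,
    (∀ φ : SchwartzMap (Ed d) ℂ, (∫ x, f x * divGrad d G (⇑φ) x) = 0) → f = 0

/-- `Rj = ∂_j P^{-1/2}` is the `j`-th Riesz transform of `P`, defined as the strong
limit `s-lim_n π^{-1/2} ∂_j ∫_{1/n}^n e^{-tP} dt/√t`; here `gn n` is the vector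
integral `∫_{1/n}^n e^{-tP} f dt/√t` and `wn n` is its distributional `∂_j`
derivative. -/
def RieszOf (d : ℕ) (G : Ed d → Fin d → Fin d → ℝ) (S : SpectralCalc d G) (j : Fin d)
    (Rj : L2 d →L[ℂ] L2 d) : Prop :=
  ∀ (f : L2 d) (gn wn : ℕ → L2 d),
    (∀ n : ℕ, gn n = ∫ t in Set.Icc ((n : ℝ)⁻¹) (n : ℝ),
        ((Real.sqrt t)⁻¹ : ℝ) • (S.map (fun lam => Complex.exp (-(t : ℂ) * ((max lam 0 : ℝ) : ℂ))) f)) →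
    (∀ (n : ℕ) (φ : SchwartzMap (Ed d) ℂ),
        (∫ x, (wn n) x * φ x) = -∫ x, (gn n) x * pd d j (⇑φ) x) →
    Tendsto (fun n : ℕ => ((Real.sqrt Real.pi)⁻¹ : ℝ) • wn n) atTop (𝓝 (Rj f))


/-- Euler field applied to a vector valued function. -/
def ED {V F : Type} [NormedAddCommGroup V] [NormedSpace ℝ V] [NormedAddCommGroup F]
    [NormedSpace ℝ F] (f : V → F) : V → F := fun x => fderiv ℝ f x x

theorem two_le_smooth : (2 : WithTop ℕ∞) ≤ ((⊤ : ℕ∞) : WithTop ℕ∞) :=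
  WithTop.coe_le_coe.2 (le_top : (2 : ℕ∞) ≤ ⊤)

theorem landau_one {F : Type} [NormedAddCommGroup F] [NormedSpace ℝ F]
    (u0 u1 u2 : ℝ → F) (h0 : ∀ t, HasDerivAt u0 (u1 t) t) (h1 : ∀ t, HasDerivAt u1 (u2 t) t)
    (A B : ℝ) (hA : ∀ t ≤ 0, ‖u0 t‖ ≤ A) (hB : ∀ t ≤ 0, ‖u2 t‖ ≤ B)
    (s : ℝ) (hs : 0 < s) (t : ℝ) (ht : t ≤ 0) : ‖u1 t‖ ≤ 2 * A / s + s * B := by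
  -- w r = u0 r - r • u1 t on [t-s,t]
  have hB0 : 0 ≤ B := (norm_nonneg _).trans (hB 0 le_rfl)
  have key : ∀ r ∈ Set.Icc (t - s) t, ‖u1 r - u1 t‖ ≤ B * s := by
    intro r hr
    have := (convex_Icc (t - s) t).norm_image_sub_le_of_norm_hasDerivWithin_le (f := u1) (f' := u2)
      (C := B) (fun y _ => (h1 y).hasDerivWithinAt) (fun y hy => hB y (hy.2.trans ht))
      (x := t) (y := r) ⟨by linarith, le_rfl⟩ hr
    refine this.trans ?_
    gcongr
    rw [Real.norm_eq_abs, abs_le]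
    constructor <;> linarith [hr.1, hr.2]
  have k2 := (convex_Icc (t - s) t).norm_image_sub_le_of_norm_hasDerivWithin_le
      (f := fun r => u0 r - r • u1 t) (f' := fun r => u1 r - (1:ℝ) • u1 t)
      (C := B * s) (fun y _ => ((h0 y).sub ((hasDerivAt_id y).smul_const (u1 t))).hasDerivWithinAt)
      (fun y hy => by simpa using key y hy)
      (x := t - s) (y := t) ⟨le_rfl, by linarith⟩ ⟨by linarith, le_rfl⟩
  have e1 : u0 t - t • u1 t - (u0 (t - s) - (t - s) • u1 t) = (u0 t - u0 (t - s)) - s • u1 t := by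
    rw [sub_smul]; abel
  rw [e1] at k2
  have e2 : ‖s • u1 t‖ ≤ ‖u0 t - u0 (t - s)‖ + ‖(u0 t - u0 (t - s)) - s • u1 t‖ := by
    have := norm_sub_le (u0 t - u0 (t - s)) ((u0 t - u0 (t - s)) - s • u1 t)
    simpa using this
  have e3 := norm_sub_le (u0 t) (u0 (t - s))
  have e4 := hA t ht
  have e5 := hA (t - s) (by linarith)
  rw [norm_smul, Real.norm_of_nonneg hs.le] at e2
  have e6 : ‖t - (t - s)‖ = s := by
    rw [Real.norm_of_nonneg] <;> linarith
  rw [e6] at k2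
  have e7 : s * ‖u1 t‖ ≤ s * (2 * A / s + s * B) := by
    have : s * (2 * A / s + s * B) = 2 * A + B * s * s := by field_simp
    rw [this]; linarith
  exact le_of_mul_le_mul_left e7 hs

/-- A tower of successive derivatives on the line, bounded on the negative half line. -/
def Tower {F : Type} [NormedAddCommGroup F] [NormedSpace ℝ F] (K : ℕ → ℝ) (u : ℕ → ℝ → F) : Prop :=
  ∀ n, (∀ t, HasDerivAt (u n) (u (n + 1) t) t) ∧ ∀ t ≤ 0, ‖u n t‖ ≤ K n

theorem Tower.shift {F : Type} [NormedAddCommGroup F] [NormedSpace ℝ F] {K : ℕ → ℝ}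
    {u : ℕ → ℝ → F} (h : Tower K u) (m : ℕ) {C : ℝ} (hC : 1 ≤ C) :
    Tower (fun n => K (n + m)) (fun n t => C⁻¹ • u (n + m) t) := by
  intro n
  constructor
  · intro t
    have := ((h (n + m)).1 t).const_smul C⁻¹
    have e : n + 1 + m = n + m + 1 := by ring
    simp only [e]
    exact this
  · intro t ht
    rw [norm_smul, Real.norm_of_nonneg (by positivity)]
    have h1 : C⁻¹ ≤ 1 := inv_le_one_of_one_le₀ hC
    have := (h (n + m)).2 t ht
    calc _ ≤ 1 * ‖u (n + m) t‖ := by gcongr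
      _ ≤ _ := by simpa using this

theorem tower_one (F : Type) [NormedAddCommGroup F] [NormedSpace ℝ F] (k : ℕ) :
    ∀ K : ℕ → ℝ, ∃ C : ℝ, 1 ≤ C ∧ ∀ u : ℕ → ℝ → F, Tower K u → ∀ η : ℝ, 0 < η → η ≤ 1 →
      (∀ t ≤ 0, ‖u 0 t‖ ≤ η) → ∀ t ≤ 0, ‖u 1 t‖ ≤ C * η ^ ((k : ℝ) / (k + 2)) := by
  induction k with
  | zero =>
    intro K
    refine ⟨max 1 (K 1), le_max_left _ _, fun u hu η h0 h1 h t ht => ?_⟩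
    simpa using Or.inr ((hu 1).2 t ht)
  | succ k ih =>
    intro K
    obtain ⟨C, hC, H⟩ := ih K
    obtain ⟨C', hC', H'⟩ := ih (fun n => K (n + 1))
    refine ⟨2 + C * C', by nlinarith, fun u hu η h0 h1 h t ht => ?_⟩
    set c : ℝ := (k : ℝ) / (k + 2) with hc
    have hc0 : 0 ≤ c := by positivity
    have hcpos : 0 < C := by linarith
    have hη : 0 < η ^ c := Real.rpow_pos_of_pos h0 _
    have hu1 := H u hu η h0 h1 h
    have hu2 : ∀ t ≤ 0, ‖u 2 t‖ ≤ C * C' * η ^ (c * c) := by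
      intro t ht
      have := H' _ (hu.shift 1 hC) (η ^ c) hη (Real.rpow_le_one h0.le h1 hc0) (by
        intro t ht
        rw [norm_smul, Real.norm_of_nonneg (by positivity), inv_mul_le_iff₀ hcpos]
        exact hu1 t ht) t ht
      rw [norm_smul, Real.norm_of_nonneg (by positivity), inv_mul_le_iff₀ hcpos,
        ← Real.rpow_mul h0.le] at this
      simpa [mul_assoc] using this
    have := landau_one (u 0) (u 1) (u 2) (hu 0).1 (hu 1).1 η _ h hu2 (η ^ ((1 - c * c) / 2))
      (Real.rpow_pos_of_pos h0 _) t ht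
    have e1 : η / η ^ ((1 - c * c) / 2) = η ^ ((1 + c * c) / 2) := by
      rw [div_eq_iff (Real.rpow_pos_of_pos h0 _).ne', ← Real.rpow_add h0]
      ring_nf; simp
    have e2 : η ^ ((1 - c * c) / 2) * η ^ (c * c) = η ^ ((1 + c * c) / 2) := by
      rw [← Real.rpow_add h0]; ring_nf
    have e3 : η ^ ((1 + c * c) / 2) ≤ η ^ (((k + 1 : ℕ) : ℝ) / ((k + 1 : ℕ) + 2)) := by
      apply Real.rpow_le_rpow_of_exponent_ge h0 h1
      rw [hc]; push_cast
      rw [div_mul_div_comm, div_le_iff₀ (by positivity)]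
      have hk : (0:ℝ) ≤ k := by positivity
      field_simp
      nlinarith
    calc ‖u 1 t‖ ≤ _ := this
      _ = (2 + C * C') * η ^ ((1 + c * c) / 2) := by
        rw [mul_div_assoc, e1, mul_left_comm, e2]; ring
      _ ≤ _ := by gcongr

theorem tower_all (F : Type) [NormedAddCommGroup F] [NormedSpace ℝ F] (n : ℕ) :
    ∀ (K : ℕ → ℝ) (c : ℝ), 0 ≤ c → c < 1 → ∃ C : ℝ, 1 ≤ C ∧ ∀ u : ℕ → ℝ → F, Tower K u →
      ∀ η : ℝ, 0 < η → η ≤ 1 →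
      (∀ t ≤ 0, ‖u 0 t‖ ≤ η) → ∀ t ≤ 0, ‖u n t‖ ≤ C * η ^ c := by
  induction n with
  | zero =>
    intro K c hc hc1
    refine ⟨1, le_rfl, fun u hu η h0 h1 h t ht => ?_⟩
    rw [one_mul]
    refine (h t ht).trans ?_
    conv_lhs => rw [← Real.rpow_one η]
    exact Real.rpow_le_rpow_of_exponent_ge h0 h1 hc1.le
  | succ n ih =>
    intro K c hc hc1
    obtain ⟨C, hC, H⟩ := ih K ((1 + c) / 2) (by linarith) (by linarith)
    obtain ⟨k, hk⟩ : ∃ k : ℕ, (1 + c) / 2 ≤ (k : ℝ) / (k + 2) := by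
      obtain ⟨k, hk⟩ := exists_nat_ge (2 * (1 + c) / (1 - c))
      refine ⟨k, ?_⟩
      rw [div_le_iff₀ (by linarith)] at hk
      rw [div_le_div_iff₀ (by norm_num) (by positivity)]
      nlinarith
    obtain ⟨C', hC', H'⟩ := tower_one F k (fun m => K (m + n))
    refine ⟨C * C', by nlinarith, fun u hu η h0 h1 h t ht => ?_⟩
    have hcpos : 0 < C := by linarith
    have hη : 0 < η ^ ((1 + c) / 2) := Real.rpow_pos_of_pos h0 _
    have hη1 : η ^ ((1 + c) / 2) ≤ 1 := Real.rpow_le_one h0.le h1 (by linarith)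
    have := H' _ (hu.shift n hC) (η ^ ((1 + c) / 2)) hη hη1 (by
        intro t ht
        rw [norm_smul, Real.norm_of_nonneg (by positivity), inv_mul_le_iff₀ hcpos, zero_add]
        exact H u hu η h0 h1 h t ht) t ht
    rw [norm_smul, Real.norm_of_nonneg (by positivity), inv_mul_le_iff₀ hcpos,
        ← Real.rpow_mul h0.le, add_comm 1 n] at this
    refine this.trans ?_
    rw [← mul_assoc]
    gcongr ?_ * ?_
    apply Real.rpow_le_rpow_of_exponent_ge h0 h1
    nlinarith

section EulerAux
variable {V F : Type} [NormedAddCommGroup V] [NormedSpace ℝ V] [NormedAddCommGroup F]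
    [NormedSpace ℝ F]

theorem ED_smooth {f : V → F} (hf : ContDiff ℝ (⊤ : ℕ∞) f) : ContDiff ℝ (⊤ : ℕ∞) (ED f) := by
  have : ContDiff ℝ (⊤ : ℕ∞) (fderiv ℝ f) := hf.fderiv_right (by simp)
  exact this.clm_apply contDiff_id

theorem ED_iter_smooth {f : V → F} (hf : ContDiff ℝ (⊤ : ℕ∞) f) (n : ℕ) :
    ContDiff ℝ (⊤ : ℕ∞) (ED^[n] f) := by
  induction n with
  | zero => exact hf
  | succ n ih => rw [Function.iterate_succ_apply']; exact ED_smooth ih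

theorem second_diff {f : V → F} (hf : ContDiff ℝ (⊤ : ℕ∞) f) {B : ℝ}
    (hB : ∀ x, ‖iteratedFDeriv ℝ 2 f x‖ ≤ B) (y w : V) :
    ‖f (y + (w + w)) - f (y + w) - (f (y + w) - f y)‖ ≤ B * ‖w‖ ^ 2 := by
  have hd : Differentiable ℝ f := hf.differentiable (by simp)
  have hd2 : Differentiable ℝ (fderiv ℝ f) := 
    (hf.fderiv_right (m := (⊤ : ℕ∞)) (by simp)).differentiable (by simp)
  have h2 : ∀ x, ‖fderiv ℝ (fderiv ℝ f) x‖ ≤ B := by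
    intro x
    have := hB x
    rw [← norm_iteratedFDeriv_fderiv, ← norm_iteratedFDeriv_fderiv, norm_iteratedFDeriv_zero] at this
    exact this
  have hl : ∀ z, ‖fderiv ℝ f (z + w) - fderiv ℝ f z‖ ≤ B * ‖w‖ := by
    intro z
    have := convex_univ.norm_image_sub_le_of_norm_fderiv_le (𝕜 := ℝ) (f := fderiv ℝ f) (C := B)
      (fun x _ => hd2 x) (fun x _ => h2 x) (Set.mem_univ z) (Set.mem_univ (z + w))
    simpa using this
  have hD : ∀ z, HasFDerivAt (fun z => f (z + w) - f z) (fderiv ℝ f (z + w) - fderiv ℝ f z) z := by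
    intro z
    exact ((hasFDerivAt_comp_add_right w).2 (hd (z + w)).hasFDerivAt).sub (hd z).hasFDerivAt
  have := convex_univ.norm_image_sub_le_of_norm_hasFDerivWithin_le (𝕜 := ℝ) (f := fun z => f (z + w) - f z)
      (C := B * ‖w‖)
      (fun x _ => (hD x).hasFDerivWithinAt) (fun x _ => hl x) (Set.mem_univ y) (Set.mem_univ (y + w))
  simp only [add_sub_cancel_left] at this
  rw [add_assoc] at this
  rw [sq, ← mul_assoc]; exact this

theorem hasDerivAt_dil {f : V → F} (hf : ContDiff ℝ (⊤ : ℕ∞) f) (x : V) (t : ℝ) :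
    HasDerivAt (fun t => f (Real.exp t • x)) (ED f (Real.exp t • x)) t := by
  have hd : Differentiable ℝ f := hf.differentiable (by simp)
  exact (hd _).hasFDerivAt.comp_hasDerivAt t ((Real.hasDerivAt_exp t).smul_const x)

/-- Vector valued version of the symbol class. -/
def SD (f : V → F) : Prop :=
  (ContDiff ℝ (⊤ : ℕ∞) f ∧ ∀ n : ℕ, ∃ C : ℝ, ∀ x, ‖iteratedFDeriv ℝ n f x‖ ≤ C) ∧
  ∀ n : ℕ, ∃ C : ℝ, ∀ x, ‖ED^[n] f x‖ ≤ C

theorem SD.fderiv_iter {f : V → F} (hf : SD f) (n : ℕ) :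
    ∃ C : ℝ, ∀ x, ‖fderiv ℝ (ED^[n] f) x‖ ≤ C := by
  obtain ⟨⟨hs, hb⟩, hE⟩ := hf
  obtain ⟨B0, hB0⟩ := hb 2
  choose K hK using hE
  set B := max B0 1 with hBdef
  have hB1 : 1 ≤ B := le_max_right _ _
  have hB : ∀ x, ‖iteratedFDeriv ℝ 2 f x‖ ≤ B := fun x => (hB0 x).trans (le_max_left _ _)
  obtain ⟨C, hC, H⟩ := tower_all F n (fun m => 4 * K m) (3 / 4) (by norm_num) (by norm_num)
  have hBp : 0 < B := by linarith
  have hK0 : ∀ m, 0 ≤ K m := fun m => (norm_nonneg _).trans (hK m 0)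
  -- second differences
  have hsd : ∀ (x v : V), ‖v‖ = 1 → ∀ s : ℝ, 0 < s → s ≤ 1 →
      ‖ED^[n] f (x + (s • v + s • v)) - ED^[n] f (x + s • v) - (ED^[n] f (x + s • v) - ED^[n] f x)‖
        ≤ B * (C * (s ^ 2) ^ (3 / 4 : ℝ)) := by
    intro x v hv s hs0 hs1
    set u : ℕ → ℝ → F := fun m t => (ED^[m] f (Real.exp t • (x + (s • v + s • v)))
      - ED^[m] f (Real.exp t • (x + s • v)) -
      (ED^[m] f (Real.exp t • (x + s • v)) - ED^[m] f (Real.exp t • x))) with hu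
    have hT : Tower (fun m => 4 * K m) u := by
      intro m
      constructor
      · intro t
        have := fun y => hasDerivAt_dil (ED_iter_smooth hs m) y t
        simp only [hu, Function.iterate_succ_apply']
        exact ((this _).sub (this _)).sub ((this _).sub (this _))
      · intro t ht
        have := norm_sub_le (ED^[m] f (Real.exp t • (x + (s • v + s • v)))
      - ED^[m] f (Real.exp t • (x + s • v))) (ED^[m] f (Real.exp t • (x + s • v)) - ED^[m] f (Real.exp t • x))
        have h1 := norm_sub_le (ED^[m] f (Real.exp t • (x + (s • v + s • v)))) (ED^[m] f (Real.exp t • (x + s • v)))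
        have h2 := norm_sub_le (ED^[m] f (Real.exp t • (x + s • v))) (ED^[m] f (Real.exp t • x))
        have h3 := fun y => hK m (Real.exp t • y)
        have h4 := h3 (x + (s • v + s • v))
        have h5 := h3 (x + s • v)
        have h6 := h3 x
        simp only [hu]
        linarith
    have hT' := hT.shift 0 hB1
    have := H _ hT' (s ^ 2) (by positivity) (by nlinarith) (by
      intro t ht
      rw [norm_smul, Real.norm_of_nonneg (by positivity), inv_mul_le_iff₀ hBp]
      have := second_diff hs hB (Real.exp t • x) (Real.exp t • s • v)
      simp only [hu, Function.iterate_zero, id, smul_add, add_zero] at this ⊢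
      refine this.trans ?_
      gcongr
      rw [norm_smul, norm_smul, hv, mul_one, Real.norm_of_nonneg hs0.le, Real.norm_of_nonneg (Real.exp_pos t).le]
      have : Real.exp t ≤ 1 := Real.exp_le_one_iff.2 ht
      nlinarith) 0 le_rfl
    rw [norm_smul, Real.norm_of_nonneg (by positivity), inv_mul_le_iff₀ hBp] at this
    simpa [hu] using this
  set r : ℝ := (1 / 2 : ℝ) ^ (1 / 2 : ℝ) with hr
  have hr0 : 0 < r := Real.rpow_pos_of_pos (by norm_num) _
  have hr1 : r < 1 := Real.rpow_lt_one (by norm_num) (by norm_num) (by norm_num)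
  refine ⟨2 * K n + 2 * (B * C) * (1 - r)⁻¹, fun x => ?_⟩
  have hr1' : 0 < 1 - r := by linarith
  refine ContinuousLinearMap.opNorm_le_of_unit_norm (by have := hK0 n; positivity) (fun v hv => ?_)
  set g := ED^[n] f with hg
  have hgs : ContDiff ℝ (⊤ : ℕ∞) g := ED_iter_smooth hs n
  set q : ℕ → F := fun k => (2 : ℝ) ^ k • (g (x + ((1 / 2 : ℝ) ^ k) • v) - g x) with hq
  have hstep : ∀ k, ‖q (k + 1) - q k‖ ≤ 2 * (B * C) * r ^ k := by
    intro k
    set s : ℝ := (1 / 2 : ℝ) ^ (k + 1) with hsdef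
    have hs0 : 0 < s := by positivity
    have h1 := hsd x v hv s hs0 (pow_le_one₀ (by norm_num) (by norm_num))
    have e1 : ((1 / 2 : ℝ) ^ k) • v = s • v + s • v := by
      rw [← add_smul]; congr 1; rw [hsdef, pow_succ]; ring
    have e2 : q (k + 1) - q k = -((2 : ℝ) ^ k • (g (x + (s • v + s • v)) - g (x + s • v) - (g (x + s • v) - g x))) := by
      simp only [hq]
      rw [e1, ← hsdef, pow_succ]
      module
    rw [e2, norm_neg, norm_smul, Real.norm_of_nonneg (by positivity)]
    have e3 : (s ^ 2) ^ (3 / 4 : ℝ) = s * r ^ (k + 1) := by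
      rw [← Real.rpow_natCast s 2, ← Real.rpow_mul hs0.le,
        show ((2 : ℕ) : ℝ) * (3 / 4) = 1 + 1 / 2 by norm_num, Real.rpow_add hs0, Real.rpow_one,
        hr, hsdef, ← Real.rpow_natCast, ← Real.rpow_natCast, ← Real.rpow_mul (by norm_num), ← Real.rpow_mul (by norm_num),
        mul_comm (1 / 2 : ℝ) ((k + 1 : ℕ) : ℝ)]
    rw [e3] at h1
    have e4 : (2 : ℝ) ^ k * s = 1 / 2 := by
      rw [hsdef, pow_succ, ← mul_assoc, ← mul_pow]; norm_num
    calc _ ≤ (2 : ℝ) ^ k * (B * (C * (s * r ^ (k + 1)))) := by gcongr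
      _ = (2 ^ k * s) * (B * C) * r * r ^ k := by ring
      _ ≤ 2 * (B * C) * r ^ k := by
        rw [e4]
        have : 0 < B * C := by positivity
        have h3 : 0 < B * C * r ^ k := by positivity
        nlinarith
  have hbd : ∀ k, ‖q k‖ ≤ 2 * K n + 2 * (B * C) * ∑ i ∈ Finset.range k, r ^ i := by
    intro k
    induction k with
    | zero =>
      simp only [hq, pow_zero, one_smul, Finset.range_zero, Finset.sum_empty, mul_zero, add_zero]
      have := norm_sub_le (g (x + v)) (g x)
      have h1 := hK n (x + v)
      have h2 := hK n x
      linarith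
    | succ k ih =>
      rw [Finset.sum_range_succ, mul_add]
      have := norm_add_le (q k) (q (k + 1) - q k)
      rw [add_sub_cancel] at this
      linarith [hstep k]
  have hlim : Tendsto q atTop (𝓝 (fderiv ℝ g x v)) := by
    have hd := (hgs.differentiable (by simp) x).hasFDerivAt
    have h2 : Tendsto (fun k : ℕ => (2 : ℝ) ^ k) atTop atTop :=
      tendsto_pow_atTop_atTop_of_one_lt (by norm_num)
    have := (hd.lim_real v).comp h2
    refine this.congr fun k => ?_
    simp [hq]
  refine le_of_tendsto hlim.norm (Eventually.of_forall fun k => (hbd k).trans ?_)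
  have : ∑ i ∈ Finset.range k, r ^ i ≤ (1 - r)⁻¹ := by
    rw [← tsum_geometric_of_lt_one hr0.le hr1]
    exact (summable_geometric_of_lt_one hr0.le hr1).sum_le_tsum _ (fun i _ => by positivity)
  gcongr

theorem fderiv_ED {f : V → F} (hf : ContDiff ℝ (⊤ : ℕ∞) f) :
    fderiv ℝ (ED f) = ED (fderiv ℝ f) + fderiv ℝ f := by
  have hd2 : Differentiable ℝ (fderiv ℝ f) := 
    (hf.fderiv_right (m := (⊤ : ℕ∞)) (by simp)).differentiable (by simp)
  ext x v
  have h : HasFDerivAt (ED f) _ x := (hd2 x).hasFDerivAt.clm_apply (hasFDerivAt_id x)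
  rw [h.fderiv]
  have hsymm : IsSymmSndFDerivAt ℝ f x := 
    hf.contDiffAt.isSymmSndFDerivAt (by simp only [minSmoothness_of_isRCLikeNormedField]; exact two_le_smooth)
  simp [ED, hsymm v x]
  try abel

theorem ED_add {f g : V → F} (hf : ContDiff ℝ (⊤ : ℕ∞) f) (hg : ContDiff ℝ (⊤ : ℕ∞) g) :
    ED (f + g) = ED f + ED g := by
  ext x
  have h1 := hf.differentiable (by simp) x
  have h2 := hg.differentiable (by simp) x
  simp [ED, fderiv_add h1 h2]

theorem ED_smul {f : V → F} (hf : ContDiff ℝ (⊤ : ℕ∞) f) (c : ℝ) :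
    ED (c • f) = c • ED f := by
  ext x
  have h1 := hf.differentiable (by simp) x
  simp [ED, fderiv_const_smul h1 c]

theorem ED_iter_lin {f g : V → F} (hf : ContDiff ℝ (⊤ : ℕ∞) f) (hg : ContDiff ℝ (⊤ : ℕ∞) g)
    (c : ℝ) (n : ℕ) :
    ED^[n] (f + c • g) = ED^[n] f + c • ED^[n] g := by
  induction n with
  | zero => rfl
  | succ n ih =>
    have h := (ED_iter_smooth hg n)
    rw [Function.iterate_succ_apply', ih, ED_add (ED_iter_smooth hf n) (g := c • ED^[n] g) (h.const_smul c),
      ED_smul h, Function.iterate_succ_apply', Function.iterate_succ_apply']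

theorem iter_fderiv_bdd (n : ℕ) : ∀ g : V → F, ContDiff ℝ (⊤ : ℕ∞) g →
    (∀ k, ∃ C : ℝ, ∀ x, ‖fderiv ℝ (ED^[k] g) x‖ ≤ C) →
    ∃ C : ℝ, ∀ x, ‖ED^[n] (fderiv ℝ g) x‖ ≤ C := by
  induction n with
  | zero => intro g hg h; exact h 0
  | succ n ih =>
    intro g hg h
    have hsd : ContDiff ℝ (⊤ : ℕ∞) (fderiv ℝ g) := hg.fderiv_right (by simp)
    have hsd' : ContDiff ℝ (⊤ : ℕ∞) (fderiv ℝ (ED g)) := (ED_smooth hg).fderiv_right (by simp)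
    obtain ⟨C1, h1⟩ := ih g hg h
    obtain ⟨C2, h2⟩ := ih (ED g) (ED_smooth hg) (fun k => h (k + 1))
    have e : ED (fderiv ℝ g) = fderiv ℝ (ED g) + (-1 : ℝ) • fderiv ℝ g := by
      rw [fderiv_ED hg]; simp
    refine ⟨C2 + C1, fun x => ?_⟩
    rw [Function.iterate_succ_apply, e, ED_iter_lin hsd' hsd]
    refine (norm_add_le _ _).trans (add_le_add (h2 x) ?_)
    simpa using h1 x

theorem SD.fderiv {f : V → F} (hf : SD f) : SD (fderiv ℝ f) := by
  refine ⟨⟨hf.1.1.fderiv_right (by simp), fun n => ?_⟩, fun n => 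
    iter_fderiv_bdd n f hf.1.1 hf.fderiv_iter⟩
  obtain ⟨C, h⟩ := hf.1.2 (n + 1)
  exact ⟨C, fun x => by rw [norm_iteratedFDeriv_fderiv]; exact h x⟩
end EulerAux

theorem SD.ED_bdd {V : Type} [NormedAddCommGroup V] [NormedSpace ℝ V] (n : ℕ) :
    ∀ (F : Type) [NormedAddCommGroup F] [NormedSpace ℝ F] (f : V → F), SD f →
    ∃ C : ℝ, ∀ x, ‖iteratedFDeriv ℝ n (ED f) x‖ ≤ C := by
  induction n with
  | zero => 
    intro F _ _ f hf
    obtain ⟨C, h⟩ := hf.2 1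
    exact ⟨C, fun x => by rw [norm_iteratedFDeriv_zero]; exact h x⟩
  | succ n ih =>
    intro F _ _ f hf
    obtain ⟨C1, h1⟩ := ih _ _ hf.fderiv
    obtain ⟨C2, h2⟩ := hf.fderiv.1.2 n
    refine ⟨C1 + C2, fun x => ?_⟩
    rw [← norm_iteratedFDeriv_fderiv, fderiv_ED hf.1.1]
    have s1 := (ED_smooth hf.fderiv.1.1).of_le (m := n) (by exact_mod_cast le_top)
    have s2 := hf.fderiv.1.1.of_le (m := n) (by exact_mod_cast le_top)
    rw [iteratedFDeriv_add s1 s2]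
    exact (norm_add_le _ _).trans (add_le_add (h1 x) (h2 x))

section EulerAux
variable {V F : Type} [NormedAddCommGroup V] [NormedSpace ℝ V] [NormedAddCommGroup F]
    [NormedSpace ℝ F]

theorem SD.euler {f : V → F} (hf : SD f) : SD (ED f) :=
  ⟨⟨ED_smooth hf.1.1, fun n => SD.ED_bdd n F f hf⟩, fun n => hf.2 (n + 1)⟩

theorem SD.lin {f g : V → F} (hf : SD f) (hg : SD g) (c : ℝ) : SD (f + c • g) := by
  refine ⟨⟨hf.1.1.add (hg.1.1.const_smul c), fun n => ?_⟩, fun n => ?_⟩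
  · obtain ⟨C1, h1⟩ := hf.1.2 n
    obtain ⟨C2, h2⟩ := hg.1.2 n
    refine ⟨C1 + ‖c‖ * C2, fun x => ?_⟩
    have s1 := hf.1.1.of_le (m := n) (by exact_mod_cast le_top)
    have s2 := hg.1.1.of_le (m := n) (by exact_mod_cast le_top)
    rw [iteratedFDeriv_add s1 (g := c • g) (s2.const_smul c), Pi.add_apply,
      iteratedFDeriv_const_smul_apply s2.contDiffAt]
    refine (norm_add_le _ _).trans (add_le_add (h1 x) ?_)
    rw [norm_smul]
    gcongr
    exact h2 x
  · obtain ⟨C1, h1⟩ := hf.2 n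
    obtain ⟨C2, h2⟩ := hg.2 n
    refine ⟨C1 + ‖c‖ * C2, fun x => ?_⟩
    rw [ED_iter_lin hf.1.1 hg.1.1]
    refine (norm_add_le _ _).trans (add_le_add (h1 x) ?_)
    rw [Pi.smul_apply, norm_smul]
    gcongr
    exact h2 x

theorem SD.comb {f : V → F} (hf : SD f) : SD (fun x => (2 : ℝ) • f x - ED f x) := by
  have e : (fun x => (2 : ℝ) • f x - ED f x) = (f + (1 : ℝ) • f) + (-1 : ℝ) • ED f := by
    ext x
    simp only [Pi.add_apply, Pi.smul_apply]
    module
  rw [e]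
  exact (hf.lin hf 1).lin hf.euler (-1)

theorem pd_smooth {f : V → F} (hf : ContDiff ℝ (⊤ : ℕ∞) f) (v : V) :
    ContDiff ℝ (⊤ : ℕ∞) (fun y => fderiv ℝ f y v) := by
  have : ContDiff ℝ (⊤ : ℕ∞) (fderiv ℝ f) := hf.fderiv_right (by simp)
  exact this.clm_apply contDiff_const

theorem pd_ED {f : V → F} (hf : ContDiff ℝ (⊤ : ℕ∞) f) (x v : V) :
    fderiv ℝ (ED f) x v = ED (fun y => fderiv ℝ f y v) x + fderiv ℝ f x v := by
  have hd2 : Differentiable ℝ (fderiv ℝ f) :=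
    (hf.fderiv_right (m := (⊤ : ℕ∞)) (by simp)).differentiable (by simp)
  rw [fderiv_ED hf]
  have h : HasFDerivAt (fun y => fderiv ℝ f y v) _ x :=
    (hd2 x).hasFDerivAt.clm_apply (hasFDerivAt_const v x)
  simp [ED, h.fderiv]

theorem smooth_diff {f : V → F} (hf : ContDiff ℝ (⊤ : ℕ∞) f) (x : V) : DifferentiableAt ℝ f x :=
  hf.differentiable (by simp) x

theorem comm_lhs {b u : V → ℂ} (hb : ContDiff ℝ (⊤ : ℕ∞) b) (hu : ContDiff ℝ (⊤ : ℕ∞) u)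
    (c : ℂ) (e e' x : V) :
    fderiv ℝ (fun y => b y * fderiv ℝ (fun z => (ED u z + c * u z) / Complex.I) y e) x e'
      = (ED (fun z => fderiv ℝ (fun y => b y * fderiv ℝ u y e) z e') x
        + (2 + c) * fderiv ℝ (fun y => b y * fderiv ℝ u y e) x e'
        - fderiv ℝ (fun y => ED b y * fderiv ℝ u y e) x e') / Complex.I := by
  set W : V → ℂ := fun y => b y * fderiv ℝ u y e with hW
  have hWs : ContDiff ℝ (⊤ : ℕ∞) W := hb.mul (pd_smooth hu e)
  have hZs : ContDiff ℝ (⊤ : ℕ∞) (fun y => ED b y * fderiv ℝ u y e) :=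
    (ED_smooth hb).mul (pd_smooth hu e)
  have e1 : (fun y => b y * fderiv ℝ (fun z => (ED u z + c * u z) / Complex.I) y e)
      = fun y => (Complex.I)⁻¹ * ((ED W y + (1 + c) * W y) - ED b y * fderiv ℝ u y e) := by
    ext y
    have h1 : HasFDerivAt (fun z => (ED u z + c * u z) * (Complex.I)⁻¹) _ y :=
      ((smooth_diff (ED_smooth hu) y).hasFDerivAt.add
        ((smooth_diff hu y).hasFDerivAt.const_mul c)).mul_const (Complex.I)⁻¹
    have h2 : HasFDerivAt W _ y :=
      (smooth_diff hb y).hasFDerivAt.mul (smooth_diff (pd_smooth hu e) y).hasFDerivAt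
    have h3 : ED W y = b y * ED (fun y => fderiv ℝ u y e) y + ED b y * fderiv ℝ u y e := by
      simp only [ED]
      rw [h2.fderiv]
      simp
      ring
    simp only [div_eq_mul_inv]
    rw [h1.fderiv, h3]
    simp only [ContinuousLinearMap.smul_apply, ContinuousLinearMap.add_apply, smul_eq_mul, pd_ED hu, hW]
    ring
  rw [e1]
  have h4 : HasFDerivAt (fun y => (Complex.I)⁻¹ * ((ED W y + (1 + c) * W y) - ED b y * fderiv ℝ u y e)) _ x :=
    (((smooth_diff (ED_smooth hWs) x).hasFDerivAt.add
      ((smooth_diff hWs x).hasFDerivAt.const_mul (1 + c))).sub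
        (smooth_diff hZs x).hasFDerivAt).const_mul (Complex.I)⁻¹
  rw [h4.fderiv]
  simp only [ContinuousLinearMap.smul_apply, ContinuousLinearMap.add_apply,
    ContinuousLinearMap.sub_apply, smul_eq_mul, pd_ED hWs]
  ring

theorem comm_rhs {b u : V → ℂ} (hb : ContDiff ℝ (⊤ : ℕ∞) b) (hu : ContDiff ℝ (⊤ : ℕ∞) u)
    (e e' x : V) :
    fderiv ℝ (fun y => (2 * b y - ED b y) * fderiv ℝ u y e) x e'
      = 2 * fderiv ℝ (fun y => b y * fderiv ℝ u y e) x e'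
        - fderiv ℝ (fun y => ED b y * fderiv ℝ u y e) x e' := by
  have hWs : ContDiff ℝ (⊤ : ℕ∞) (fun y => b y * fderiv ℝ u y e) := hb.mul (pd_smooth hu e)
  have hZs : ContDiff ℝ (⊤ : ℕ∞) (fun y => ED b y * fderiv ℝ u y e) :=
    (ED_smooth hb).mul (pd_smooth hu e)
  have e1 : (fun y => (2 * b y - ED b y) * fderiv ℝ u y e)
      = fun y => 2 * (b y * fderiv ℝ u y e) - ED b y * fderiv ℝ u y e := by
    ext y; ring
  have h := ((smooth_diff hWs x).hasFDerivAt.const_mul (2 : ℂ)).sub (smooth_diff hZs x).hasFDerivAt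
  rw [e1, HasFDerivAt.fderiv (f := fun y => 2 * (b y * fderiv ℝ u y e) - ED b y * fderiv ℝ u y e) h]
  simp

theorem ED_neg_sum {ι : Type} [Fintype ι] (w : ι → ι → V → ℂ)
    (hw : ∀ j k, ContDiff ℝ (⊤ : ℕ∞) (w j k)) (x : V) :
    ED (fun y => -∑ j, ∑ k, w j k y) x = -∑ j, ∑ k, ED (w j k) x := by
  have h : HasFDerivAt (fun y => -∑ j, ∑ k, w j k y) (-∑ j, ∑ k, fderiv ℝ (w j k) x) x :=
    (HasFDerivAt.fun_sum fun j _ => HasFDerivAt.fun_sum fun k _ =>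
      (smooth_diff (hw j k) x).hasFDerivAt).neg
  simp only [ED]
  rw [h.fderiv]
  simp [ContinuousLinearMap.sum_apply]

theorem ED_ofReal {a : V → ℝ} (ha : ContDiff ℝ (⊤ : ℕ∞) a) (x : V) :
    ED (fun y => (a y : ℂ)) x = ((ED a x : ℝ) : ℂ) := by
  have h : HasFDerivAt (fun y => (a y : ℂ)) (Complex.ofRealCLM.comp (fderiv ℝ a x)) x :=
    Complex.ofRealCLM.hasFDerivAt.comp x (smooth_diff ha x).hasFDerivAt
  simp only [ED]
  rw [h.fderiv]
  simp

end EulerAux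

/-- **Lemma (commutator of a div-grad operator with the generator of dilations).**
If `B = ∑ D_j (b_{jk} D_k)` is of div-grad type (coefficients in `S_dil`) and
`A = (x·∇ + ∇·x)/(2i)`, then `i[B,A]` is again of div-grad type; more precisely
`i[B,A] = ∑ D_j (2 b_{jk} - x·∇ b_{jk}) D_k` (computed on Schwartz functions). -/
theorem statement4 (d : ℕ) (b : Ed d → Fin d → Fin d → ℝ)
    (hb : ∀ j k, MemSdil d fun x => b x j k) :
    (∀ j k, MemSdil d fun x => commCoef d b x j k) ∧
    ∀ (u : SchwartzMap (Ed d) ℂ) (x : Ed d),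
      Complex.I * (divGrad d b (opA d ⇑u) x - opA d (divGrad d b ⇑u) x)
        = divGrad d (commCoef d b) (⇑u) x := by
  refine ⟨fun j k => ?_, fun u x => ?_⟩
  · have h : SD (fun x => b x j k) := hb j k
    exact h.comb
  · have hus : ContDiff ℝ (⊤ : ℕ∞) (⇑u) := u.smooth ⊤
    have hbs : ∀ j k, ContDiff ℝ (⊤ : ℕ∞) (fun y => b y j k) := fun j k => (hb j k).1.1
    have hbc : ∀ j k, ContDiff ℝ (⊤ : ℕ∞) (fun y => (b y j k : ℂ)) := fun j k =>
      Complex.ofRealCLM.contDiff.comp (hbs j k)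
    set e : Fin d → Ed d := fun k => EuclideanSpace.single k (1:ℝ) with he
    set W : Fin d → Fin d → Ed d → ℂ := fun j k z =>
      fderiv ℝ (fun y => (b y j k : ℂ) * fderiv ℝ (⇑u) y (e k)) z (e j) with hW
    have hWs : ∀ j k, ContDiff ℝ (⊤ : ℕ∞) (W j k) := fun j k =>
      pd_smooth ((hbc j k).mul (pd_smooth hus (e k))) (e j)
    set Z : Fin d → Fin d → ℂ := fun j k =>
      fderiv ℝ (fun y => ED (fun y => (b y j k : ℂ)) y * fderiv ℝ (⇑u) y (e k)) x (e j) with hZ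
    have h1 : divGrad d b (opA d ⇑u) x
        = -∑ j, ∑ k, (ED (W j k) x + (2 + (d / 2 : ℂ)) * W j k x - Z j k) / Complex.I := by
      unfold divGrad divGradC
      congr 1
      refine Finset.sum_congr rfl fun j _ => Finset.sum_congr rfl fun k _ => ?_
      exact comm_lhs (hbc j k) hus (d / 2 : ℂ) (e k) (e j) x
    have h2 : opA d (divGrad d b ⇑u) x
        = ((-∑ j, ∑ k, ED (W j k) x) + (d / 2 : ℂ) * (-∑ j, ∑ k, W j k x)) / Complex.I := by
      rw [← ED_neg_sum W hWs x]
      rfl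
    have h3 : divGrad d (commCoef d b) (⇑u) x = -∑ j, ∑ k, (2 * W j k x - Z j k) := by
      unfold divGrad divGradC
      congr 1
      refine Finset.sum_congr rfl fun j _ => Finset.sum_congr rfl fun k _ => ?_
      rw [← comm_rhs (hbc j k) hus (e k) (e j) x]
      have hf : ∀ y, ((commCoef d b y j k : ℝ) : ℂ)
          = 2 * (b y j k : ℂ) - ED (fun y => (b y j k : ℂ)) y := by
        intro y
        rw [ED_ofReal (hbs j k)]
        simp only [commCoef, xdotOp, ED]
        push_cast
        rfl
      simp only [hf]
      rfl
    rw [h1, h2, h3]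
    simp only [← Finset.sum_div, Finset.sum_sub_distrib, Finset.sum_add_distrib, ← Finset.mul_sum]
    have hI : Complex.I ≠ 0 := Complex.I_ne_zero
    field_simp
    ring
end
end

section
/- For all u₁, u₂ ∈ 𝒮(ℝ^d) and all 0 < h < 1, the commutator form satisfies the representation formula (i[P, F(hA)]u₁, u₂) = (h/2) ∫_ℝ e^{-|t|} ( (1/t) ∫₀^t ( e^{ithA} P_{sh} u₁, u₂ ) ds ) dt, where F(λ) = arctan(λ). -/
open MeasureTheory Filter Topology Complex
open scoped Real ENNReal FourierTransform ComplexConjugate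

noncomputable section

theorem aux_int (f : ℝ → ℂ) (hf : Continuous f) (hd : DifferentiableAt ℝ f 0) (M : ℝ)
    (hM : ∀ t, ‖f t‖ ≤ M) :
    Integrable (fun t : ℝ => ((Real.exp (-|t|) : ℝ) : ℂ) * ((t : ℂ)⁻¹ * (f t - f 0))) := by
  have hc : Continuous (dslope f 0) := by
    rw [← continuousOn_univ, continuousOn_dslope univ_mem]
    exact ⟨hf.continuousOn, hd⟩
  obtain ⟨B, hB⟩ := (isCompact_Icc (a := (-1:ℝ)) (b := 1)).exists_bound_of_continuousOn
    hc.continuousOn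
  have hM0 : 0 ≤ M := (norm_nonneg _).trans (hM 0)
  have hB0 : 0 ≤ B := (norm_nonneg _).trans (hB 0 (by simp))
  have hbd : ∀ t, ‖dslope f 0 t‖ ≤ B + 2 * M := by
    intro t
    by_cases ht : t ∈ Set.Icc (-1:ℝ) 1
    · linarith [hB t ht]
    · have h1 : 1 < |t| := by
        by_contra hcon
        exact ht (abs_le.mp (not_lt.mp hcon))
      have h0 : t ≠ 0 := by
        rintro rfl
        simp at h1; linarith
      rw [dslope_of_ne _ h0, slope_def_module, norm_smul, sub_zero, norm_inv, Real.norm_eq_abs]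
      have h2 : ‖f t - f 0‖ ≤ 2 * M := (norm_sub_le _ _).trans (by linarith [hM t, hM 0])
      have h3 : |t|⁻¹ ≤ 1 := inv_le_one_of_one_le₀ h1.le
      calc |t|⁻¹ * ‖f t - f 0‖ ≤ 1 * (2 * M) := by gcongr
        _ ≤ _ := by linarith
  have hexp : Integrable (fun t : ℝ => Real.exp (-|t|)) := by
    rw [← integrableOn_univ, ← Set.Iic_union_Ioi (a := (0:ℝ))]
    refine IntegrableOn.union ?_ ?_
    · refine (integrableOn_exp_Iic 0).congr_fun (fun t ht => ?_) measurableSet_Iic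
      have ht' : t ≤ 0 := ht
      simp [abs_of_nonpos ht']
    · refine (integrableOn_exp_neg_Ioi 0).congr_fun (fun t ht => ?_) measurableSet_Ioi
      have ht' : 0 < t := ht
      simp [abs_of_pos ht']
  have hI : Integrable (fun t : ℝ => ((Real.exp (-|t|) : ℝ) : ℂ) * dslope f 0 t) := by
    refine Integrable.mono' (hexp.mul_const (B + 2 * M)) ?_ ?_
    · exact Continuous.aestronglyMeasurable (by fun_prop)
    · refine Eventually.of_forall fun t => ?_
      rw [norm_mul, Complex.norm_real, Real.norm_eq_abs, abs_of_pos (Real.exp_pos _)]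
      gcongr
      exact hbd t
  refine hI.congr ?_
  have : ∀ᵐ t : ℝ, t ≠ 0 := by
    simp [ae_iff]
  filter_upwards [this] with t ht
  rw [dslope_of_ne _ ht, slope_def_module]
  simp

theorem aux_split (f : ℝ → ℂ) (hf : Continuous f) (hd : DifferentiableAt ℝ f 0) (M : ℝ)
    (hM : ∀ t, ‖f t‖ ≤ M) :
    ∫ t in Set.Ioi (0:ℝ), ((Real.exp (-t) / t : ℝ) : ℂ) * (f t - f (-t))
     = ∫ t : ℝ, ((Real.exp (-|t|) : ℝ) : ℂ) * ((t : ℂ)⁻¹ * (f t - f 0)) := by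
  have hI := aux_int f hf hd M hM
  rw [← intervalIntegral.integral_Iic_add_Ioi (b := (0:ℝ)) hI.integrableOn hI.integrableOn]
  have h1 := integral_comp_neg_Ioi (0:ℝ)
    (fun t : ℝ => ((Real.exp (-|t|) : ℝ) : ℂ) * ((t : ℂ)⁻¹ * (f t - f 0)))
  rw [neg_zero] at h1
  rw [← h1, ← integral_add hI.comp_neg.integrableOn hI.integrableOn]
  refine setIntegral_congr_fun measurableSet_Ioi fun t ht => ?_
  have ht' : (0:ℝ) < t := ht
  simp only [abs_neg, abs_of_pos ht']
  push_cast
  have : (t : ℂ) ≠ 0 := by exact_mod_cast ht'.ne'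
  field_simp
  ring

/-- Differentiation of dilated families under the integral sign. -/
theorem keyL {d : ℕ} (a w : Ed d → ℂ) (c C : ℝ) (ha : ContDiff ℝ 1 a) (hb : ∀ x, ‖a x‖ ≤ C)
    (hb' : ∀ x, ‖fderiv ℝ a x‖ ≤ C) (hw : Integrable w)
    (hw1 : Integrable (fun x => ‖x‖ * ‖w x‖)) :
    (∀ s : ℝ, Integrable (fun x => ((Real.exp (c * s) : ℝ) : ℂ) * a (Real.exp (-s) • x) * w x)) ∧
    (∀ s : ℝ, Integrable (fun x => ((Real.exp (c * s) : ℝ) : ℂ) *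
        (c * a (Real.exp (-s) • x) - fderiv ℝ a (Real.exp (-s) • x) (Real.exp (-s) • x)) * w x)) ∧
    (∀ s : ℝ, HasDerivAt
      (fun s : ℝ => ∫ x, ((Real.exp (c * s) : ℝ) : ℂ) * a (Real.exp (-s) • x) * w x)
      (∫ x, ((Real.exp (c * s) : ℝ) : ℂ) *
        (c * a (Real.exp (-s) • x) - fderiv ℝ a (Real.exp (-s) • x) (Real.exp (-s) • x)) * w x) s) ∧
    Continuous (fun s : ℝ => ∫ x, ((Real.exp (c * s) : ℝ) : ℂ) *
        (c * a (Real.exp (-s) • x) - fderiv ℝ a (Real.exp (-s) • x) (Real.exp (-s) • x)) * w x) := by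
  have hC : 0 ≤ C := (norm_nonneg _).trans (hb 0)
  have hac : Continuous a := ha.continuous
  have hfc : Continuous (fderiv ℝ a) := ha.continuous_fderiv (by norm_num)
  have had : Differentiable ℝ a := ha.differentiable (by norm_num)
  have hm1 : ∀ s : ℝ, AEStronglyMeasurable
      (fun x => ((Real.exp (c * s) : ℝ) : ℂ) * a (Real.exp (-s) • x) * w x) volume := fun s =>
    (Continuous.aestronglyMeasurable (by fun_prop)).mul hw.aestronglyMeasurable
  have hm2 : ∀ s : ℝ, AEStronglyMeasurable
      (fun x => ((Real.exp (c * s) : ℝ) : ℂ) *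
        (c * a (Real.exp (-s) • x) - fderiv ℝ a (Real.exp (-s) • x) (Real.exp (-s) • x)) * w x)
        volume := fun s =>
    (Continuous.aestronglyMeasurable (by fun_prop)).mul hw.aestronglyMeasurable
  have hi1 : ∀ s : ℝ, Integrable
      (fun x => ((Real.exp (c * s) : ℝ) : ℂ) * a (Real.exp (-s) • x) * w x) := by
    intro s
    refine Integrable.mono' (hw.norm.const_mul (Real.exp (c * s) * C)) (hm1 s)
      (Eventually.of_forall fun x => ?_)
    rw [norm_mul, norm_mul, Complex.norm_real, Real.norm_eq_abs, abs_of_pos (Real.exp_pos _)]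
    gcongr
    exact hb _
  -- domination
  let bd : ℝ → Ed d → ℝ := fun S x =>
    Real.exp (|c| * S) * (|c| * C) * ‖w x‖ + Real.exp (|c| * S) * (C * Real.exp S) * (‖x‖ * ‖w x‖)
  have hbdi : ∀ S, Integrable (bd S) := fun S => (hw.norm.const_mul _).add (hw1.const_mul _)
  have hbd : ∀ S s : ℝ, |s| ≤ S → ∀ x, ‖((Real.exp (c * s) : ℝ) : ℂ) *
        (c * a (Real.exp (-s) • x) - fderiv ℝ a (Real.exp (-s) • x) (Real.exp (-s) • x)) * w x‖
        ≤ bd S x := by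
    intro S s hs x
    have e1 : Real.exp (c * s) ≤ Real.exp (|c| * S) := by
      apply Real.exp_le_exp.mpr
      calc c * s ≤ |c * s| := le_abs_self _
        _ = |c| * |s| := abs_mul _ _
        _ ≤ _ := by gcongr
    have e2 : Real.exp (-s) ≤ Real.exp S := Real.exp_le_exp.mpr (by linarith [neg_abs_le s])
    have e3 : ‖(c * a (Real.exp (-s) • x) - fderiv ℝ a (Real.exp (-s) • x) (Real.exp (-s) • x))‖
        ≤ |c| * C + C * (Real.exp S * ‖x‖) := by
      refine (norm_sub_le _ _).trans (add_le_add ?_ ?_)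
      · rw [norm_mul, Complex.norm_real, Real.norm_eq_abs]
        gcongr
        exact hb _
      · refine (ContinuousLinearMap.le_opNorm _ _).trans ?_
        rw [norm_smul, Real.norm_eq_abs, abs_of_pos (Real.exp_pos _)]
        gcongr
        exact hb' _
    rw [norm_mul, norm_mul, Complex.norm_real, Real.norm_eq_abs, abs_of_pos (Real.exp_pos _)]
    calc _ ≤ Real.exp (|c| * S) * (|c| * C + C * (Real.exp S * ‖x‖)) * ‖w x‖ := by gcongr
      _ = bd S x := by simp only [bd]; ring
  have hnh : ∀ s : ℝ, {r : ℝ | |r| ≤ |s| + 1} ∈ 𝓝 s := by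
    intro s
    have : Continuous fun r : ℝ => |r| := continuous_abs
    filter_upwards [this.continuousAt.eventually (gt_mem_nhds (by linarith : |s| < |s| + 1))]
      with r hr using le_of_lt hr
  have hder : ∀ x, ∀ s : ℝ, HasDerivAt
      (fun s : ℝ => ((Real.exp (c * s) : ℝ) : ℂ) * a (Real.exp (-s) • x) * w x)
      (((Real.exp (c * s) : ℝ) : ℂ) *
        (c * a (Real.exp (-s) • x) - fderiv ℝ a (Real.exp (-s) • x) (Real.exp (-s) • x)) * w x) s := by
    intro x s
    have h1 : HasDerivAt (fun s : ℝ => Real.exp (c * s)) (Real.exp (c * s) * c) s := by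
      have := ((hasDerivAt_id s).const_mul c).exp
      simpa using this
    have h2 : HasDerivAt (fun s : ℝ => Real.exp (-s) • x) (-(Real.exp (-s)) • x) s := by
      have := ((hasDerivAt_id s).neg.exp).smul_const x
      simpa using this
    have h3 := (had (Real.exp (-s) • x)).hasFDerivAt.comp_hasDerivAt s h2
    have h4 := ((h1.ofReal_comp).mul h3).mul_const (w x)
    refine h4.congr_deriv ?_
    simp only [Function.comp, neg_smul, map_neg]
    push_cast
    ring
  refine ⟨hi1, fun s => Integrable.mono' (hbdi |s|) (hm2 s)
    (Eventually.of_forall (hbd |s| s le_rfl)), fun s => ?_, ?_⟩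
  · exact (hasDerivAt_integral_of_dominated_loc_of_deriv_le (hnh s)
      (Eventually.of_forall hm1) (hi1 s) (hm2 s)
      (Eventually.of_forall fun x r hr => hbd _ r hr x) (hbdi (|s| + 1))
      (Eventually.of_forall fun x r _ => hder x r)).2
  · rw [continuous_iff_continuousAt]
    intro s
    refine continuousAt_of_dominated (bound := bd (|s| + 1)) (Eventually.of_forall hm2) ?_ (hbdi _) ?_
    · filter_upwards [hnh s] with r hr
      exact Eventually.of_forall (hbd _ r hr)
    · refine Eventually.of_forall fun x => Continuous.continuousAt ?_
      fun_prop

section Aux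

open scoped LineDeriv

/-- The standard basis vectors. -/
abbrev eb {d : ℕ} (j : Fin d) : Ed d := EuclideanSpace.single j (1:ℝ)

/-- complexified coefficient. -/
def gC {d : ℕ} (G : Ed d → Fin d → Fin d → ℝ) (j k : Fin d) : Ed d → ℂ := fun x => (G x j k : ℂ)

theorem fderiv_ofReal {d : ℕ} (a : Ed d → ℝ) (x : Ed d) (ha : DifferentiableAt ℝ a x) (v : Ed d) :
    fderiv ℝ (fun y => (a y : ℂ)) x v = ((fderiv ℝ a x v : ℝ) : ℂ) := by
  have h := Complex.ofRealCLM.hasFDerivAt.comp x ha.hasFDerivAt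
  have h2 : HasFDerivAt (fun y => (a y : ℂ)) (Complex.ofRealCLM.comp (fderiv ℝ a x)) x := h
  rw [h2.fderiv]
  rfl

theorem gC_contDiff {d : ℕ} {G : Ed d → Fin d → Fin d → ℝ} (hG : Standing d G) (j k : Fin d) :
    ContDiff ℝ (⊤ : ℕ∞) (gC G j k) := by
  have := (hG.1 j k).1
  exact Complex.ofRealCLM.contDiff.comp this

theorem gC_bound {d : ℕ} {G : Ed d → Fin d → Fin d → ℝ} (hG : Standing d G) (j k : Fin d) (n : ℕ) :
    ∃ C : ℝ, ∀ x, ‖iteratedFDeriv ℝ n (gC G j k) x‖ ≤ C := by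
  obtain ⟨C, hC⟩ := (hG.1 j k).2 n
  refine ⟨C, fun x => ?_⟩
  have h := Complex.ofRealLI.norm_iteratedFDeriv_comp_left (f := fun x => G x j k)
    (x := x) (n := (⊤ : ℕ∞)) (i := n) ((hG.1 j k).1.contDiffAt) (by exact_mod_cast le_top)
  have h2 : (Complex.ofRealLI ∘ fun x => G x j k) = gC G j k := rfl
  rw [h2] at h
  rw [h]
  exact hC x

theorem gC_temp {d : ℕ} {G : Ed d → Fin d → Fin d → ℝ} (hG : Standing d G) (j k : Fin d) :
    (gC G j k).HasTemperateGrowth := by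
  refine ⟨gC_contDiff hG j k, fun n => ?_⟩
  obtain ⟨C, hC⟩ := gC_bound hG j k n
  exact ⟨0, C, fun x => by simpa using hC x⟩

theorem gC_bounds {d : ℕ} {G : Ed d → Fin d → Fin d → ℝ} (hG : Standing d G) (j k : Fin d) :
    ∃ C : ℝ, (∀ x, ‖gC G j k x‖ ≤ C) ∧ (∀ x, ‖fderiv ℝ (gC G j k) x‖ ≤ C) ∧
      (∀ x, ‖fderiv ℝ (fderiv ℝ (gC G j k)) x‖ ≤ C) := by
  obtain ⟨C0, h0⟩ := gC_bound hG j k 0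
  obtain ⟨C1, h1⟩ := gC_bound hG j k 1
  obtain ⟨C2, h2⟩ := gC_bound hG j k 2
  refine ⟨max C0 (max C1 C2), fun x => ?_, fun x => ?_, fun x => ?_⟩
  · refine le_trans ?_ ((h0 x).trans (le_max_left _ _))
    simp
  · refine le_trans ?_ ((h1 x).trans ((le_max_left _ _).trans (le_max_right _ _)))
    rw [norm_iteratedFDeriv_one]
  · refine le_trans ?_ ((h2 x).trans ((le_max_right _ _).trans (le_max_right _ _)))
    have := norm_iteratedFDeriv_fderiv (𝕜 := ℝ) (f := gC G j k) (x := x) (n := 1)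
    rw [← this, norm_iteratedFDeriv_one]

/-- `P u` as a Schwartz function. -/
def PS {d : ℕ} (G : Ed d → Fin d → Fin d → ℝ) (u : SchwartzMap (Ed d) ℂ) : SchwartzMap (Ed d) ℂ :=
  -∑ j : Fin d, ∑ k : Fin d, ∂_{eb j} (SchwartzMap.smulLeftCLM ℂ (gC G j k) (∂_{eb k} u))

theorem sm_apply {d : ℕ} {G : Ed d → Fin d → Fin d → ℝ} (hG : Standing d G) (j k : Fin d)
    (u : SchwartzMap (Ed d) ℂ) :
    ⇑(SchwartzMap.smulLeftCLM ℂ (gC G j k) (∂_{eb k} u))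
      = fun y => (G y j k : ℂ) * fderiv ℝ u y (eb k) := by
  ext y
  rw [SchwartzMap.smulLeftCLM_apply_apply (gC_temp hG j k), SchwartzMap.lineDerivOp_apply_eq_fderiv]
  rfl

theorem PS_coe {d : ℕ} {G : Ed d → Fin d → Fin d → ℝ} (hG : Standing d G)
    (u : SchwartzMap (Ed d) ℂ) : ⇑(PS G u) = divGrad d G u := by
  ext x
  simp only [PS, divGrad, divGradC, neg_apply, sum_apply,
    SchwartzMap.lineDerivOp_apply_eq_fderiv, sm_apply hG]

/-- The form `(z, w) ↦ conj z * w`. -/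
def Bc : ℂ →L[ℝ] ℂ →L[ℝ] ℂ := (ContinuousLinearMap.mul ℝ ℂ).comp (Complex.conjCLE : ℂ →L[ℝ] ℂ)

theorem Bc_apply (z w : ℂ) : Bc z w = (starRingEnd ℂ) z * w := rfl

theorem pair_integrable {d : ℕ} (φ ψ : Ed d → ℂ) (hφ : Continuous φ) (C : ℝ)
    (hC : ∀ x, ‖φ x‖ ≤ C) (hψ : Integrable ψ) :
    Integrable (fun x => (starRingEnd ℂ) (φ x) * ψ x) := by
  refine Integrable.mono' (hψ.norm.const_mul C)
    ((Complex.continuous_conj.comp hφ).aestronglyMeasurable.mul hψ.aestronglyMeasurable)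
    (Eventually.of_forall fun x => ?_)
  rw [norm_mul, RCLike.norm_conj]
  gcongr
  exact hC x

theorem pairS_integrable {d : ℕ} (φ ψ : SchwartzMap (Ed d) ℂ) :
    Integrable (fun x => (starRingEnd ℂ) (φ x) * ψ x) :=
  pair_integrable _ _ φ.continuous _ (SchwartzMap.norm_le_seminorm ℝ φ) ψ.integrable

theorem ibp {d : ℕ} (φ ψ : SchwartzMap (Ed d) ℂ) (v : Ed d) :
    ∫ x, (starRingEnd ℂ) (φ x) * (∂_{v} ψ) x = -∫ x, (starRingEnd ℂ) ((∂_{v} φ) x) * ψ x :=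
  SchwartzMap.integral_bilinear_lineDerivOp_right_eq_neg_left φ ψ Bc v

theorem P_symm {d : ℕ} {G : Ed d → Fin d → Fin d → ℝ} (hG : Standing d G)
    (φ ψ : SchwartzMap (Ed d) ℂ) :
    pairL2 d (divGrad d G φ) ψ = pairL2 d φ (divGrad d G ψ) := by
  rw [← PS_coe hG, ← PS_coe hG]
  unfold pairL2
  have h1 : ∫ x, (starRingEnd ℂ) (PS G φ x) * ψ x
      = ∑ j : Fin d, ∑ k : Fin d, ∫ x, (starRingEnd ℂ)
        (SchwartzMap.smulLeftCLM ℂ (gC G j k) (∂_{eb k} φ) x) * (∂_{eb j} ψ) x := by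
    simp only [ibp, PS, neg_apply, sum_apply, map_neg, map_sum, neg_mul,
      Finset.sum_mul]
    rw [integral_neg, integral_finsetSum]
    · simp only [← Finset.sum_neg_distrib]
      refine Finset.sum_congr rfl fun j _ => ?_
      rw [integral_finsetSum]
      · simp only [← Finset.sum_neg_distrib]
      · exact fun k _ => pairS_integrable _ _
    · exact fun j _ => integrable_finsetSum _ fun k _ => pairS_integrable _ _
  have h2 : ∫ x, (starRingEnd ℂ) (φ x) * PS G ψ x
      = ∑ j : Fin d, ∑ k : Fin d, ∫ x, (starRingEnd ℂ) ((∂_{eb j} φ) x) *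
        (SchwartzMap.smulLeftCLM ℂ (gC G j k) (∂_{eb k} ψ) x) := by
    have : ∀ j k : Fin d, ∫ x, (starRingEnd ℂ) ((∂_{eb j} φ) x) *
        (SchwartzMap.smulLeftCLM ℂ (gC G j k) (∂_{eb k} ψ) x) =
        -∫ x, (starRingEnd ℂ) (φ x) *
          (∂_{eb j} (SchwartzMap.smulLeftCLM ℂ (gC G j k) (∂_{eb k} ψ))) x := by
      intro j k
      rw [ibp, neg_neg]
    simp only [this, PS, neg_apply, sum_apply, mul_neg, Finset.mul_sum]
    rw [integral_neg, integral_finsetSum]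
    · simp only [← Finset.sum_neg_distrib]
      refine Finset.sum_congr rfl fun j _ => ?_
      rw [integral_finsetSum]
      · simp only [← Finset.sum_neg_distrib]
      · exact fun k _ => pairS_integrable _ _
    · exact fun j _ => integrable_finsetSum _ fun k _ => pairS_integrable _ _
  rw [h1, h2, Finset.sum_comm]
  refine Finset.sum_congr rfl fun j _ => Finset.sum_congr rfl fun k _ => ?_
  congr 1
  ext x
  simp only [sm_apply hG, SchwartzMap.lineDerivOp_apply_eq_fderiv, map_mul, Complex.conj_ofReal,
    hG.2.1 x k j]
  ring

/-- The dilation of a Schwartz function. -/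
def dilS {d : ℕ} (t : ℝ) (u : SchwartzMap (Ed d) ℂ) : SchwartzMap (Ed d) ℂ :=
  ((Real.exp (t * d / 2) : ℝ) : ℂ) • SchwartzMap.compCLMOfContinuousLinearEquiv ℂ
    (ContinuousLinearEquiv.smulLeft (R₁ := ℝ) (M₁ := Ed d) (Units.mk0 (Real.exp t) (Real.exp_ne_zero t))) u

theorem dilS_coe {d : ℕ} (t : ℝ) (u : SchwartzMap (Ed d) ℂ) : ⇑(dilS t u) = dil d t u := by
  ext x
  simp [dilS, dil]

theorem pair_dil {d : ℕ} (τ : ℝ) (φ ψ : Ed d → ℂ) :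
    pairL2 d (dil d τ φ) ψ = pairL2 d φ (dil d (-τ) ψ) := by
  unfold pairL2 dil
  have h := Measure.integral_comp_smul (volume : Measure (Ed d))
    (fun x => (starRingEnd ℂ) (φ x) * (((Real.exp (-τ * d / 2) : ℝ) : ℂ) * ψ (Real.exp (-τ) • x)))
    (Real.exp τ)
  have e1 : |(Real.exp τ ^ Module.finrank ℝ (Ed d))⁻¹| = Real.exp (-(τ * d)) := by
    rw [abs_of_pos (by positivity), finrank_euclideanSpace_fin, ← Real.exp_nat_mul, ← Real.exp_neg]
    congr 1; ring
  rw [e1] at h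
  have h3 : ∀ I : ℂ, I = ((Real.exp (τ * d) : ℝ) : ℂ) * (Real.exp (-(τ * d)) • I) := by
    intro I
    rw [Complex.real_smul, ← mul_assoc, ← Complex.ofReal_mul, ← Real.exp_add]
    simp
  rw [h3 (∫ x, (starRingEnd ℂ) (φ x) * _), ← h, ← integral_const_mul]
  congr 1
  ext x
  rw [smul_smul, ← Real.exp_add, neg_add_cancel, Real.exp_zero, one_smul, map_mul,
    Complex.conj_ofReal]
  have : ((Real.exp (τ * d / 2) : ℝ) : ℂ) =
      ((Real.exp (τ * d) : ℝ) : ℂ) * ((Real.exp (-τ * d / 2) : ℝ) : ℂ) := by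
    rw [← Complex.ofReal_mul, ← Real.exp_add]
    congr 2; ring
  rw [this]
  ring

theorem dil_dil {d : ℕ} (s t : ℝ) (φ : Ed d → ℂ) : dil d s (dil d t φ) = dil d (s + t) φ := by
  ext x
  simp only [dil]
  rw [smul_smul, ← Real.exp_add, ← mul_assoc, ← Complex.ofReal_mul, ← Real.exp_add]
  congr 3
  · ring_nf
  · ring_nf

theorem dil_zero {d : ℕ} (φ : Ed d → ℂ) : dil d 0 φ = φ := by
  ext x; simp [dil]

theorem wS {d : ℕ} (φ ψ : SchwartzMap (Ed d) ℂ) :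
    Integrable (fun x : Ed d => ‖x‖ * ‖(starRingEnd ℂ) (φ x) * ψ x‖) := by
  have h := ((ψ.integrable_pow_mul volume 1).const_mul (SchwartzMap.seminorm ℝ 0 0 φ))
  refine Integrable.mono' h ?_ (Eventually.of_forall fun x => ?_)
  · exact (Continuous.aestronglyMeasurable (by fun_prop))
  · rw [norm_mul, norm_norm, norm_norm, norm_mul, RCLike.norm_conj, pow_one]
    have := SchwartzMap.norm_le_seminorm ℝ φ x
    calc ‖x‖ * (‖φ x‖ * ‖ψ x‖) = ‖φ x‖ * (‖x‖ * ‖ψ x‖) := by ring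
      _ ≤ _ := by gcongr

theorem pair_self {d : ℕ} (φ : Ed d → ℂ) : pairL2 d φ φ = ((∫ x, ‖φ x‖ ^ 2 : ℝ) : ℂ) := by
  unfold pairL2
  rw [← integral_complex_ofReal]
  congr 1
  ext x
  rw [Complex.conj_mul']
  push_cast
  rfl

theorem sq_int {d : ℕ} (φ : SchwartzMap (Ed d) ℂ) : Integrable (fun x => ‖φ x‖ ^ 2) := by
  have := (pairS_integrable φ φ).norm
  refine this.congr (Eventually.of_forall fun x => ?_)
  simp only [norm_mul, RCLike.norm_conj, sq]

theorem pair_le {d : ℕ} (φ ψ : SchwartzMap (Ed d) ℂ) :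
    ‖pairL2 d φ ψ‖ ≤ (∫ x, ‖φ x‖ ^ 2) + ∫ x, ‖ψ x‖ ^ 2 := by
  unfold pairL2
  rw [← integral_add (sq_int φ) (sq_int ψ)]
  refine norm_integral_le_of_norm_le ((sq_int φ).add (sq_int ψ)) (Eventually.of_forall fun x => ?_)
  rw [norm_mul, RCLike.norm_conj]
  nlinarith [sq_nonneg (‖φ x‖ - ‖ψ x‖), sq_nonneg (‖φ x‖), sq_nonneg (‖ψ x‖)]

theorem cpl_bound {d : ℕ} (φ ψ : SchwartzMap (Ed d) ℂ) (τ : ℝ) :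
    ‖pairL2 d (dil d τ φ) ψ‖ ≤ (∫ x, ‖φ x‖ ^ 2) + ∫ x, ‖ψ x‖ ^ 2 := by
  have h := pair_le (dilS τ φ) ψ
  have h2 : ∫ x, ‖dil d τ φ x‖ ^ 2 = ∫ x, ‖φ x‖ ^ 2 := by
    have e := pair_dil τ (φ : Ed d → ℂ) (dil d τ φ)
    rw [dil_dil, neg_add_cancel, dil_zero, pair_self, pair_self] at e
    exact_mod_cast e
  rw [dilS_coe, h2] at h
  exact h

theorem S_bounds {d : ℕ} (φ : SchwartzMap (Ed d) ℂ) :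
    ∃ C : ℝ, (∀ x, ‖φ x‖ ≤ C) ∧ ∀ x, ‖fderiv ℝ φ x‖ ≤ C := by
  obtain ⟨C0, _, h0⟩ := φ.decay 0 0
  obtain ⟨C1, _, h1⟩ := φ.decay 0 1
  refine ⟨max C0 C1, fun x => ?_, fun x => ?_⟩
  · exact le_trans (by simpa using h0 x) (le_max_left _ _)
  · refine le_trans ?_ (le_max_right _ _)
    have := h1 x
    rwa [pow_zero, one_mul, norm_iteratedFDeriv_one] at this

theorem cpl_deriv {d : ℕ} (φ ψ : SchwartzMap (Ed d) ℂ) :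
    Differentiable ℝ (fun τ => pairL2 d (dil d τ φ) ψ) := by
  obtain ⟨C, h0, h1⟩ := S_bounds ψ
  have hw : Integrable (fun x => (starRingEnd ℂ) (φ x)) := by
    refine Integrable.mono' φ.integrable.norm
      (Continuous.aestronglyMeasurable (by fun_prop)) (Eventually.of_forall fun x => ?_)
    rw [RCLike.norm_conj]
  have hw1 : Integrable (fun x => ‖x‖ * ‖(starRingEnd ℂ) (φ x)‖) := by
    have := φ.integrable_pow_mul volume 1
    simpa using this
  have h := (keyL (ψ : Ed d → ℂ) (fun x => (starRingEnd ℂ) (φ x)) (-(d:ℝ)/2) C (ψ.smooth 1) h0 h1 hw hw1).2.2.1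
  intro τ
  refine (h τ).differentiableAt.congr_of_eventuallyEq (Eventually.of_forall fun s => ?_)
  simp only [pair_dil]
  unfold pairL2 dil
  congr 1
  ext x
  rw [mul_comm]
  congr 5
  ring

theorem fderiv_smul_comp {d : ℕ} (f : Ed d → ℂ) (r : ℝ) (x : Ed d) (hf : Differentiable ℝ f) :
    HasFDerivAt (fun y => f (r • y)) (r • fderiv ℝ f (r • x)) x := by
  have h1 : HasFDerivAt (fun y : Ed d => r • y) (r • ContinuousLinearMap.id ℝ (Ed d)) x :=
    (hasFDerivAt_id x).const_smul r
  have h := (hf (r • x)).hasFDerivAt.comp x h1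
  refine h.congr_fderiv ?_
  ext w
  simp

theorem dil_inner {d : ℕ} (b : Ed d → ℂ) (hb : Differentiable ℝ b) (u : SchwartzMap (Ed d) ℂ)
    (j k : Fin d) (s : ℝ) (x : Ed d) :
    ((Real.exp (-s * d / 2) : ℝ) : ℂ) *
      fderiv ℝ (fun y => b y * fderiv ℝ (dil d s u) y (eb k)) (Real.exp (-s) • x) (eb j)
    = ((Real.exp (2 * s) : ℝ) : ℂ) * b (Real.exp (-s) • x) * (∂_{eb j} (∂_{eb k} u)) x
      + ((Real.exp (1 * s) : ℝ) : ℂ) * fderiv ℝ b (Real.exp (-s) • x) (eb j) * (∂_{eb k} u) x := by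
  have e1 : (fun y => fderiv ℝ (dil d s u) y (eb k)) =
      fun y => ((Real.exp (s * d / 2) : ℝ) : ℂ) * (((Real.exp s : ℝ) : ℂ) *
        (∂_{eb k} u) (Real.exp s • y)) := by
    ext y
    have := (fderiv_smul_comp (u : Ed d → ℂ) (Real.exp s) y u.differentiable).const_mul
      ((Real.exp (s * d / 2) : ℝ) : ℂ)
    have h2 : fderiv ℝ (dil d s u) y = _ := this.fderiv
    rw [h2, SchwartzMap.lineDerivOp_apply_eq_fderiv]
    simp
  have h2 := fderiv_smul_comp (⇑(∂_{eb k} u : SchwartzMap (Ed d) ℂ)) (Real.exp s) (Real.exp (-s) • x)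
    (∂_{eb k} u : SchwartzMap (Ed d) ℂ).differentiable
  have h3 := (hb (Real.exp (-s) • x)).hasFDerivAt.mul
    ((h2.const_mul ((Real.exp s : ℝ) : ℂ)).const_mul ((Real.exp (s * d / 2) : ℝ) : ℂ))
  have e2 : (fun y => b y * fderiv ℝ (dil d s u) y (eb k)) = fun y => b y *
      (((Real.exp (s * d / 2) : ℝ) : ℂ) * (((Real.exp s : ℝ) : ℂ) *
        (∂_{eb k} u) (Real.exp s • y))) := by
    ext y
    rw [congrFun e1 y]
  rw [e2]
  have h4 : fderiv ℝ (fun y => b y *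
      (((Real.exp (s * d / 2) : ℝ) : ℂ) * (((Real.exp s : ℝ) : ℂ) *
        (∂_{eb k} u) (Real.exp s • y)))) (Real.exp (-s) • x) = _ := h3.fderiv
  rw [h4]
  have e3 : Real.exp s • Real.exp (-s) • x = x := by
    rw [smul_smul, ← Real.exp_add, add_neg_cancel, Real.exp_zero, one_smul]
  rw [e3]
  have e4 : ((Real.exp (-s * d / 2) : ℝ) : ℂ) * ((Real.exp (s * d / 2) : ℝ) : ℂ) = 1 := by
    rw [← Complex.ofReal_mul, ← Real.exp_add]
    have : -s * d / 2 + s * d / 2 = (0:ℝ) := by ring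
    rw [this]; simp
  have e5 : ((Real.exp (2 * s) : ℝ) : ℂ) = ((Real.exp s : ℝ) : ℂ) * ((Real.exp s : ℝ) : ℂ) := by
    rw [← Complex.ofReal_mul, ← Real.exp_add, two_mul]
  rw [e5, one_mul, SchwartzMap.lineDerivOp_apply_eq_fderiv (eb j)]
  simp only [_root_.add_apply, _root_.smul_apply, smul_eq_mul,
    Complex.real_smul]
  linear_combination (((Real.exp s : ℝ) : ℂ) * ((Real.exp s : ℝ) : ℂ) * b (Real.exp (-s) • x) *
    fderiv ℝ (⇑(∂_{eb k} u : SchwartzMap (Ed d) ℂ)) x (eb j) + ((Real.exp s : ℝ) : ℂ) *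
    fderiv ℝ b (Real.exp (-s) • x) (eb j) * (∂_{eb k} u) x) * e4

theorem Pform {d : ℕ} (b : Ed d → Fin d → Fin d → ℝ)
    (hb : ∀ j k, Differentiable ℝ (fun y => b y j k)) (u : SchwartzMap (Ed d) ℂ) (s : ℝ)
    (x : Ed d) (v : ℂ) :
    (starRingEnd ℂ) (dil d (-s) (divGrad d b (dil d s u)) x) * v
    = -∑ j : Fin d, ∑ k : Fin d,
      (((Real.exp (2 * s) : ℝ) : ℂ) * gC b j k (Real.exp (-s) • x) *
          ((starRingEnd ℂ) ((∂_{eb j} (∂_{eb k} u)) x) * v)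
      + ((Real.exp (1 * s) : ℝ) : ℂ) * fderiv ℝ (gC b j k) (Real.exp (-s) • x) (eb j) *
          ((starRingEnd ℂ) ((∂_{eb k} u) x) * v)) := by
  have hb' : ∀ j k, Differentiable ℝ (gC b j k) := fun j k =>
    Complex.ofRealCLM.differentiable.comp (hb j k)
  have h1 : dil d (-s) (divGrad d b (dil d s u)) x = -∑ j : Fin d, ∑ k : Fin d,
      (((Real.exp (2 * s) : ℝ) : ℂ) * gC b j k (Real.exp (-s) • x) * (∂_{eb j} (∂_{eb k} u)) x
      + ((Real.exp (1 * s) : ℝ) : ℂ) * fderiv ℝ (gC b j k) (Real.exp (-s) • x) (eb j)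
        * (∂_{eb k} u) x) := by
    simp only [← dil_inner (gC b _ _) (hb' _ _) u]
    simp only [dil, divGrad, divGradC, mul_neg, Finset.mul_sum]
    rfl
  rw [h1]
  have h2 : ∀ j k y w, (starRingEnd ℂ) (fderiv ℝ (gC b j k) y w) = fderiv ℝ (gC b j k) y w := by
    intro j k y w
    have : fderiv ℝ (gC b j k) y w = _ := fderiv_ofReal (fun y => b y j k) y (hb j k y) w
    rw [this, Complex.conj_ofReal]
  have h3 : ∀ j k y, (starRingEnd ℂ) (gC b j k y) = gC b j k y := fun j k y =>
    Complex.conj_ofReal _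
  simp only [map_neg, map_sum, map_add, map_mul, Complex.conj_ofReal, h2, h3, neg_mul,
    Finset.sum_mul]
  congr 1
  refine Finset.sum_congr rfl fun j _ => Finset.sum_congr rfl fun k _ => ?_
  ring

theorem comm_diff {d : ℕ} {G : Ed d → Fin d → Fin d → ℝ} (hG : Standing d G) (j k : Fin d) :
    Differentiable ℝ (fun y => commCoef d G y j k) := by
  have h := (hG.1 j k).1
  have h1 : Differentiable ℝ (fun y => G y j k) := h.differentiable (by simp)
  have h2 : Differentiable ℝ (fderiv ℝ (fun y => G y j k)) :=
    ((contDiff_infty.mp h 2).fderiv_right (m := 1) (by norm_num)).differentiable (by simp)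
  unfold commCoef xdotOp
  exact (h1.const_mul 2).sub (h2.clm_apply differentiable_id)

theorem gC_comm {d : ℕ} {G : Ed d → Fin d → Fin d → ℝ} (hG : Standing d G) (j k : Fin d) :
    gC (commCoef d G) j k = fun y => ((2:ℝ) : ℂ) * gC G j k y - fderiv ℝ (gC G j k) y y := by
  have h1 : Differentiable ℝ (fun y => G y j k) := (hG.1 j k).1.differentiable (by simp)
  ext y
  have : fderiv ℝ (gC G j k) y y = _ := fderiv_ofReal (fun y => G y j k) y (h1 y) y
  rw [this]
  simp [gC, commCoef, xdotOp]

theorem gC_comm_fderiv {d : ℕ} {G : Ed d → Fin d → Fin d → ℝ} (hG : Standing d G) (j k : Fin d)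
    (y : Ed d) : fderiv ℝ (gC (commCoef d G) j k) y (eb j) =
      ((1:ℝ) : ℂ) * fderiv ℝ (gC G j k) y (eb j)
        - fderiv ℝ (fun z => fderiv ℝ (gC G j k) z (eb j)) y y := by
  have h := gC_contDiff hG j k
  have h1 : Differentiable ℝ (gC G j k) := h.differentiable (by simp)
  have h2 : Differentiable ℝ (fderiv ℝ (gC G j k)) :=
    ((contDiff_infty.mp h 2).fderiv_right (m := 1) (by norm_num)).differentiable (by simp)
  have hs : IsSymmSndFDerivAt ℝ (gC G j k) y :=
    (contDiff_infty.mp h 2).contDiffAt.isSymmSndFDerivAt (by simp)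
  have e1 := ((h1 y).hasFDerivAt.const_mul ((2:ℝ) : ℂ)).sub
    ((h2 y).hasFDerivAt.clm_apply (hasFDerivAt_id y))
  have e2 := (h2 y).hasFDerivAt.clm_apply (hasFDerivAt_const (eb j) y)
  rw [gC_comm hG]
  have e1' : fderiv ℝ (fun y => ((2:ℝ) : ℂ) * gC G j k y - fderiv ℝ (gC G j k) y y) y = _ :=
    e1.fderiv
  rw [e1', e2.fderiv]
  have := hs.eq (eb j) y
  simp [this]
  ring

/-- The properties of a parameter integral and its derivative which are used below. -/
def Kprop {d : ℕ} (f f' : ℝ → Ed d → ℂ) : Prop :=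
  (∀ s : ℝ, Integrable (f s)) ∧ (∀ s : ℝ, Integrable (f' s)) ∧
  (∀ s : ℝ, HasDerivAt (fun s : ℝ => ∫ x, f s x) (∫ x, f' s x) s) ∧
  Continuous (fun s : ℝ => ∫ x, f' s x)

theorem Kprop_add {d : ℕ} {f f' g g' : ℝ → Ed d → ℂ} (hf : Kprop f f') (hg : Kprop g g') :
    Kprop (fun s x => f s x + g s x) (fun s x => f' s x + g' s x) := by
  refine ⟨fun s => (hf.1 s).add (hg.1 s), fun s => (hf.2.1 s).add (hg.2.1 s), fun s => ?_, ?_⟩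
  · have e1 : (fun s => ∫ x, f s x + g s x) = fun s => (∫ x, f s x) + ∫ x, g s x := by
      ext s; exact integral_add (hf.1 s) (hg.1 s)
    rw [e1, integral_add (hf.2.1 s) (hg.2.1 s)]
    exact (hf.2.2.1 s).add (hg.2.2.1 s)
  · have e1 : (fun s => ∫ x, f' s x + g' s x) = fun s => (∫ x, f' s x) + ∫ x, g' s x := by
      ext s; exact integral_add (hf.2.1 s) (hg.2.1 s)
    rw [e1]
    exact hf.2.2.2.add hg.2.2.2

theorem Kprop_sum {d : ℕ} {f f' : Fin d → ℝ → Ed d → ℂ} (hf : ∀ j, Kprop (f j) (f' j)) :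
    Kprop (fun s x => ∑ j, f j s x) (fun s x => ∑ j, f' j s x) := by
  refine ⟨fun s => integrable_finsetSum _ fun j _ => (hf j).1 s,
    fun s => integrable_finsetSum _ fun j _ => (hf j).2.1 s, fun s => ?_, ?_⟩
  · have e1 : (fun s => ∫ x, ∑ j, f j s x) = fun s => ∑ j, ∫ x, f j s x := by
      ext s; exact integral_finsetSum _ fun j _ => (hf j).1 s
    rw [e1, integral_finsetSum _ fun j _ => (hf j).2.1 s]
    exact HasDerivAt.fun_sum fun j _ => (hf j).2.2.1 s
  · have e1 : (fun s => ∫ x, ∑ j, f' j s x) = fun s => ∑ j, ∫ x, f' j s x := by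
      ext s; exact integral_finsetSum _ fun j _ => (hf j).2.1 s
    rw [e1]
    exact continuous_finsetSum _ fun j _ => (hf j).2.2.2

theorem Kprop_neg {d : ℕ} {f f' : ℝ → Ed d → ℂ} (hf : Kprop f f') :
    Kprop (fun s x => -f s x) (fun s x => -f' s x) := by
  refine ⟨fun s => (hf.1 s).neg, fun s => (hf.2.1 s).neg, fun s => ?_, ?_⟩
  · simp only [integral_neg]
    exact (hf.2.2.1 s).fun_neg
  · simp only [integral_neg]
    exact hf.2.2.2.neg

theorem K_one {d : ℕ} {G : Ed d → Fin d → Fin d → ℝ} (hG : Standing d G)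
    (u v : SchwartzMap (Ed d) ℂ) (j k : Fin d) :
    Kprop (fun (s : ℝ) (x : Ed d) => ((Real.exp (2 * s) : ℝ) : ℂ) *
        gC G j k (Real.exp (-s) • x) * ((starRingEnd ℂ) (u x) * v x))
      (fun (s : ℝ) (x : Ed d) => ((Real.exp (2 * s) : ℝ) : ℂ) *
        (((2:ℝ) : ℂ) * gC G j k (Real.exp (-s) • x)
          - fderiv ℝ (gC G j k) (Real.exp (-s) • x) (Real.exp (-s) • x)) *
          ((starRingEnd ℂ) (u x) * v x)) := by
  obtain ⟨C, h0, h1, h2⟩ := gC_bounds hG j k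
  exact keyL (gC G j k) (fun x => (starRingEnd ℂ) (u x) * v x) 2 C
      (contDiff_infty.mp (gC_contDiff hG j k) 1) h0 h1 (pairS_integrable _ _) (wS _ _)

theorem K_two_bound {d : ℕ} {G : Ed d → Fin d → Fin d → ℝ} (hG : Standing d G) (j k : Fin d) :
    ContDiff ℝ 1 (fun z => fderiv ℝ (gC G j k) z (eb j)) ∧ ∃ C : ℝ,
    (∀ x, ‖fderiv ℝ (gC G j k) x (eb j)‖ ≤ C) ∧
    (∀ x, ‖fderiv ℝ (fun z => fderiv ℝ (gC G j k) z (eb j)) x‖ ≤ C) := by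
  obtain ⟨C, h0, h1, h2⟩ := gC_bounds hG j k
  have hc : ContDiff ℝ 1 (fderiv ℝ (gC G j k)) :=
    (contDiff_infty.mp (gC_contDiff hG j k) 2).fderiv_right (m := 1) (by norm_num)
  have hcd : Differentiable ℝ (fderiv ℝ (gC G j k)) := hc.differentiable (by simp)
  have n1 : ‖eb j‖ = 1 := by simp
  refine ⟨hc.clm_apply contDiff_const, C, fun x => ?_, fun x => ?_⟩
  · refine (ContinuousLinearMap.le_opNorm _ _).trans ?_
    rw [n1, mul_one]; exact h1 x
  · have e2 := (hcd x).hasFDerivAt.clm_apply (hasFDerivAt_const (eb j) x)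
    rw [e2.fderiv]
    refine ContinuousLinearMap.opNorm_le_bound _ ((norm_nonneg _).trans (h0 x)) fun w => ?_
    have h3 : ‖fderiv ℝ (fderiv ℝ (gC G j k)) x w (eb j)‖ ≤ C * ‖w‖ := by
      refine (ContinuousLinearMap.le_opNorm _ _).trans ?_
      rw [n1, mul_one]
      refine (ContinuousLinearMap.le_opNorm _ _).trans ?_
      gcongr
      exact h2 x
    simpa using h3

theorem K_two {d : ℕ} {G : Ed d → Fin d → Fin d → ℝ} (hG : Standing d G)
    (u v : SchwartzMap (Ed d) ℂ) (j k : Fin d) :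
    Kprop (fun (s : ℝ) (x : Ed d) => ((Real.exp (1 * s) : ℝ) : ℂ) *
        fderiv ℝ (gC G j k) (Real.exp (-s) • x) (eb j) * ((starRingEnd ℂ) (u x) * v x))
      (fun (s : ℝ) (x : Ed d) => ((Real.exp (1 * s) : ℝ) : ℂ) *
          (((1:ℝ) : ℂ) * fderiv ℝ (gC G j k) (Real.exp (-s) • x) (eb j)
          - fderiv ℝ (fun z => fderiv ℝ (gC G j k) z (eb j)) (Real.exp (-s) • x)
            (Real.exp (-s) • x)) * ((starRingEnd ℂ) (u x) * v x)) := by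
  obtain ⟨hc, C, h0, h1⟩ := K_two_bound hG j k
  exact keyL (fun z => fderiv ℝ (gC G j k) z (eb j)) (fun x => (starRingEnd ℂ) (u x) * v x) 1 C
      hc h0 h1 (pairS_integrable _ _) (wS _ _)

theorem K_all {d : ℕ} {G : Ed d → Fin d → Fin d → ℝ} (hG : Standing d G)
    (u v : SchwartzMap (Ed d) ℂ) :
    Kprop (fun s x => (starRingEnd ℂ) (dil d (-s) (divGrad d G (dil d s u)) x) * v x)
      (fun s x => (starRingEnd ℂ) (ptauFun d G s u x) * v x) := by
  have hGd : ∀ j k, Differentiable ℝ (fun y => G y j k) := fun j k =>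
    (hG.1 j k).1.differentiable (by simp)
  have h := Kprop_neg (Kprop_sum fun j => Kprop_sum fun k =>
    Kprop_add (K_one hG (∂_{eb j} (∂_{eb k} u)) v j k) (K_two hG (∂_{eb k} u) v j k))
  unfold ptauFun
  simp only [Pform G hGd, Pform (commCoef d G) (comm_diff hG), gC_comm_fderiv hG]
  simp only [gC_comm hG]
  exact h

theorem J_deriv {d : ℕ} {G : Ed d → Fin d → Fin d → ℝ} (hG : Standing d G)
    (u v : SchwartzMap (Ed d) ℂ) :
    (∀ s : ℝ, HasDerivAt (fun s => pairL2 d (dil d (-s) (divGrad d G (dil d s u))) v)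
      (pairL2 d (ptauFun d G s u) v) s) ∧
    Continuous (fun s => pairL2 d (ptauFun d G s u) v) :=
  (K_all hG u v).2.2

theorem main_id {d : ℕ} {G : Ed d → Fin d → Fin d → ℝ} (hG : Standing d G)
    (u₁ u₂ : SchwartzMap (Ed d) ℂ) (τ : ℝ) :
    ∫ s in (0:ℝ)..τ, pairL2 d (dil d τ (ptauFun d G s u₁)) u₂
      = pairL2 d (dil d τ u₁) (divGrad d G u₂) - pairL2 d (dil d τ (divGrad d G u₁)) u₂ := by
  obtain ⟨h1, h2⟩ := J_deriv hG u₁ (dilS (-τ) u₂)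
  have h3 := intervalIntegral.integral_eq_sub_of_hasDerivAt (a := 0) (b := τ) (fun s _ => h1 s)
    (h2.intervalIntegrable _ _)
  simp only [pair_dil τ]
  rw [dilS_coe] at h3
  rw [h3]
  have h4 : pairL2 d (dil d (-τ) (divGrad d G (dil d τ u₁))) (dil d (-τ) u₂)
      = pairL2 d (dil d τ u₁) (divGrad d G u₂) := by
    rw [← pair_dil, dil_dil, add_neg_cancel, dil_zero, ← dilS_coe, P_symm hG]
  rw [h4, neg_zero, dil_zero, dil_zero, pair_dil τ]

theorem sin_left {d : ℕ} (τ : ℝ) (φ ψ : SchwartzMap (Ed d) ℂ) :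
    pairL2 d (sinA d τ φ) ψ
      = (Complex.I / 2) * (pairL2 d (dil d τ φ) ψ - pairL2 d (dil d (-τ) φ) ψ) := by
  rw [← dilS_coe, ← dilS_coe]
  unfold pairL2 sinA
  rw [← integral_sub (pairS_integrable _ _) (pairS_integrable _ _), ← integral_const_mul]
  congr 1
  ext x
  rw [← dilS_coe, ← dilS_coe]
  simp only [map_div₀, map_sub, map_mul, Complex.conj_I, map_ofNat]
  field_simp
  rw [Complex.I_sq]
  ring

theorem sin_right {d : ℕ} (τ : ℝ) (φ ψ : SchwartzMap (Ed d) ℂ) :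
    pairL2 d φ (sinA d τ ψ)
      = (-Complex.I / 2) * (pairL2 d (dil d (-τ) φ) ψ - pairL2 d (dil d τ φ) ψ) := by
  rw [pair_dil, pair_dil, neg_neg, ← dilS_coe, ← dilS_coe]
  unfold pairL2 sinA
  rw [← integral_sub (pairS_integrable _ _) (pairS_integrable _ _), ← integral_const_mul]
  congr 1
  ext x
  rw [← dilS_coe, ← dilS_coe]
  field_simp
  rw [Complex.I_sq]
  ring

end Aux

/-- **Proposition (representation formula for the commutator `i[P, F(hA)]`).**
For `u₁, u₂ ∈ 𝒮(ℝ^d)` and `0 < h < 1`,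
`(i[P,F(hA)]u₁,u₂) = (h/2) ∫_ℝ e^{-|t|} ( (1/t) ∫₀^t (e^{ithA} P_{sh} u₁, u₂) ds ) dt`,
where `F = arctan`, `P_τ = e^{-iτA} i[P,A] e^{iτA}` and the left hand side is the
commutator form `(iF(hA)u₁, Pu₂) - (iPu₁, F(hA)u₂)`, with
`F(hA) = ∫₀^∞ sin(thA) e^{-t} dt/t` (spectral theorem); inner products are conjugate
linear in the first variable. -/
theorem statement7 (d : ℕ) (G : Ed d → Fin d → Fin d → ℝ) (hG : Standing d G)
    (u₁ u₂ : SchwartzMap (Ed d) ℂ) (h : ℝ) (h0 : 0 < h) (h1 : h < 1) :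
    (-Complex.I) * (∫ t in Set.Ioi (0:ℝ),
        ((Real.exp (-t) / t : ℝ) : ℂ) * pairL2 d (sinA d (t * h) ⇑u₁) (divGrad d G ⇑u₂))
      + Complex.I * (∫ t in Set.Ioi (0:ℝ),
        ((Real.exp (-t) / t : ℝ) : ℂ) * pairL2 d (divGrad d G ⇑u₁) (sinA d (t * h) ⇑u₂))
    = ((h / 2 : ℝ) : ℂ) * ∫ t : ℝ, ((Real.exp (-|t|) : ℝ) : ℂ) *
        ((t : ℂ)⁻¹ * ∫ s in (0:ℝ)..t, pairL2 d (dil d (t * h) (ptauFun d G (s * h) ⇑u₁)) ⇑u₂) := by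
  have hA : ∀ φ ψ : SchwartzMap (Ed d) ℂ,
      Differentiable ℝ (fun t : ℝ => pairL2 d (dil d (t * h) φ) ψ) := fun φ ψ =>
    (cpl_deriv φ ψ).comp (differentiable_id.mul_const h)
  have hB : ∀ φ ψ : SchwartzMap (Ed d) ℂ, ∃ M, ∀ t : ℝ,
      ‖pairL2 d (dil d (t * h) φ) ψ‖ ≤ M := fun φ ψ => ⟨_, fun t => cpl_bound φ ψ (t * h)⟩
  obtain ⟨M1, hM1⟩ := hB u₁ (PS G u₂)
  obtain ⟨M2, hM2⟩ := hB (PS G u₁) u₂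
  have S1 := aux_split _ (hA u₁ (PS G u₂)).continuous (hA u₁ (PS G u₂) 0) M1 hM1
  have S2 := aux_split _ (hA (PS G u₁) u₂).continuous (hA (PS G u₁) u₂ 0) M2 hM2
  have I1 := aux_int _ (hA u₁ (PS G u₂)).continuous (hA u₁ (PS G u₂) 0) M1 hM1
  have I2 := aux_int _ (hA (PS G u₁) u₂).continuous (hA (PS G u₁) u₂ 0) M2 hM2
  have L1 : ∫ t in Set.Ioi (0:ℝ), ((Real.exp (-t) / t : ℝ) : ℂ) *
        pairL2 d (sinA d (t * h) ⇑u₁) (PS G u₂)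
      = (Complex.I / 2) * ∫ t in Set.Ioi (0:ℝ), ((Real.exp (-t) / t : ℝ) : ℂ) *
        (pairL2 d (dil d (t * h) u₁) (PS G u₂) - pairL2 d (dil d (-t * h) u₁) (PS G u₂)) := by
    rw [← integral_const_mul]
    congr 1
    ext t
    rw [sin_left, neg_mul]
    ring
  have L2 : ∫ t in Set.Ioi (0:ℝ), ((Real.exp (-t) / t : ℝ) : ℂ) *
        pairL2 d (PS G u₁) (sinA d (t * h) ⇑u₂)
      = (Complex.I / 2) * ∫ t in Set.Ioi (0:ℝ), ((Real.exp (-t) / t : ℝ) : ℂ) *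
        (pairL2 d (dil d (t * h) (PS G u₁)) u₂ - pairL2 d (dil d (-t * h) (PS G u₁)) u₂) := by
    rw [← integral_const_mul]
    congr 1
    ext t
    rw [sin_right, neg_mul]
    ring
  have R : ∀ t : ℝ, ((h : ℝ) : ℂ) * ∫ s in (0:ℝ)..t,
        pairL2 d (dil d (t * h) (ptauFun d G (s * h) ⇑u₁)) ⇑u₂
      = pairL2 d (dil d (t * h) u₁) (PS G u₂) - pairL2 d (dil d (t * h) (PS G u₁)) u₂ := by
    intro t
    have e := intervalIntegral.integral_comp_mul_right (a := 0) (b := t)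
      (fun s => pairL2 d (dil d (t * h) (ptauFun d G s ⇑u₁)) ⇑u₂) h0.ne'
    rw [e, zero_mul, main_id hG, ← PS_coe hG, ← PS_coe hG, Complex.real_smul]
    have : (h : ℂ) ≠ 0 := by exact_mod_cast h0.ne'
    push_cast
    field_simp
  have Z : pairL2 d (dil d (0 * h) u₁) (PS G u₂) = pairL2 d (dil d (0 * h) (PS G u₁)) u₂ := by
    rw [zero_mul, dil_zero, dil_zero, PS_coe hG, PS_coe hG, P_symm hG]
  rw [← PS_coe hG, ← PS_coe hG, L1, L2, S1, S2]
  have F : ((h / 2 : ℝ) : ℂ) * ∫ t : ℝ, ((Real.exp (-|t|) : ℝ) : ℂ) *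
        ((t : ℂ)⁻¹ * ∫ s in (0:ℝ)..t, pairL2 d (dil d (t * h) (ptauFun d G (s * h) ⇑u₁)) ⇑u₂)
      = (1 / 2 : ℂ) * ((∫ t : ℝ, ((Real.exp (-|t|) : ℝ) : ℂ) * ((t : ℂ)⁻¹ *
          (pairL2 d (dil d (t * h) u₁) (PS G u₂) - pairL2 d (dil d (0 * h) u₁) (PS G u₂))))
        - ∫ t : ℝ, ((Real.exp (-|t|) : ℝ) : ℂ) * ((t : ℂ)⁻¹ *
          (pairL2 d (dil d (t * h) (PS G u₁)) u₂ - pairL2 d (dil d (0 * h) (PS G u₁)) u₂))) := by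
    rw [← integral_sub I1 I2, ← integral_const_mul, ← integral_const_mul]
    congr 1
    ext t
    rw [Z]
    have := R t
    push_cast at this ⊢
    linear_combination (1 / 2 : ℂ) * Complex.exp (-(|t| : ℝ)) * (t : ℂ)⁻¹ * this
  rw [F]
  have fin : ∀ X Y : ℂ, -Complex.I * (Complex.I / 2 * X) + Complex.I * (Complex.I / 2 * Y)
      = 1 / 2 * (X - Y) := fun X Y => by
    linear_combination (-(1 / 2) * X + (1 / 2) * Y) * Complex.I_sq
  exact fin _ _
end
end

section
/- Let F_ν(λ) = ∫₀^∞ sin(tλ) · t/(t² + ν²) · e^{-t} dt for ν > 0. There exists C > 0 such that |F_ν(λ)| ≤ C|λ| for all ν > 0 and λ ∈ ℝ. Moreover, for every λ ∈ ℝ, F_ν(λ) → arctan(λ) as ν → 0. -/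
open MeasureTheory Filter Topology Complex
open scoped Real ENNReal FourierTransform ComplexConjugate

noncomputable section

lemma cos_exp_integral (l : ℝ) :
    ∫ t in Set.Ioi (0:ℝ), Real.cos (t * l) * Real.exp (-t) = 1 / (1 + l ^ 2) := by
  have hl : (1 + l ^ 2) ≠ 0 := by positivity
  have hint : IntegrableOn (fun t : ℝ => Real.cos (t * l) * Real.exp (-t)) (Set.Ioi 0) := by
    refine Integrable.mono' (integrableOn_exp_neg_Ioi 0)
      (Continuous.aestronglyMeasurable (by fun_prop)) (ae_of_all _ fun t => ?_)
    rw [Real.norm_eq_abs, abs_mul, Real.abs_exp]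
    exact mul_le_of_le_one_left (Real.exp_pos _).le (Real.abs_cos_le_one _)
  have hder : ∀ t ∈ Set.Ici (0:ℝ), HasDerivAt
      (fun t : ℝ => (l * Real.sin (t * l) - Real.cos (t * l)) * Real.exp (-t) / (1 + l ^ 2))
      (Real.cos (t * l) * Real.exp (-t)) t := by
    intro t _
    have h0 : HasDerivAt (fun t : ℝ => t * l) l t := by
      simpa using (hasDerivAt_id t).mul_const l
    have h1 := ((h0.sin.const_mul l).sub h0.cos).mul (hasDerivAt_neg t).exp
    refine (h1.div_const (1 + l ^ 2)).congr_deriv ?_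
    simp only [Pi.sub_apply]
    field_simp
    ring
  have hlim : Tendsto
      (fun t : ℝ => (l * Real.sin (t * l) - Real.cos (t * l)) * Real.exp (-t) / (1 + l ^ 2))
      atTop (𝓝 0) := by
    have he : Tendsto (fun t : ℝ => (|l| + 1) * Real.exp (-t)) atTop (𝓝 0) := by
      simpa using Real.tendsto_exp_neg_atTop_nhds_zero.const_mul (|l| + 1)
    have h2 : Tendsto
      (fun t : ℝ => (l * Real.sin (t * l) - Real.cos (t * l)) * Real.exp (-t)) atTop (𝓝 0) := by
      refine squeeze_zero_norm (fun t => ?_) he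
      rw [Real.norm_eq_abs, abs_mul, Real.abs_exp]
      refine mul_le_mul_of_nonneg_right ?_ (Real.exp_pos _).le
      refine (abs_sub _ _).trans (add_le_add ?_ (Real.abs_cos_le_one _))
      rw [abs_mul]
      exact mul_le_of_le_one_right (abs_nonneg _) (Real.abs_sin_le_one _)
    simpa using h2.div_const (1 + l ^ 2)
  rw [integral_Ioi_of_hasDerivAt_of_tendsto' hder hint hlim]
  simp
  ring

lemma abs_sin_mul_le (t l : ℝ) : |Real.sin (t * l)| ≤ |t| * |l| := by
  rw [← abs_mul]; exact Real.abs_sin_le_abs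

lemma arctan_integral (l : ℝ) :
    ∫ t in Set.Ioi (0:ℝ), Real.sin (t * l) / t * Real.exp (-t) = Real.arctan l := by
  have hm : ∀ x : ℝ, AEStronglyMeasurable (fun t : ℝ => Real.sin (t * x) / t * Real.exp (-t))
      (volume.restrict (Set.Ioi 0)) := fun x => Measurable.aestronglyMeasurable (by fun_prop)
  have hd : ∀ x : ℝ, HasDerivAt
      (fun x => ∫ t in Set.Ioi (0:ℝ), Real.sin (t * x) / t * Real.exp (-t)) (1 / (1 + x ^ 2)) x := by
    intro x
    rw [← cos_exp_integral]
    refine (hasDerivAt_integral_of_dominated_loc_of_deriv_le (bound := fun t => Real.exp (-t))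
      (F' := fun x t => Real.cos (t * x) * Real.exp (-t))
      (Filter.univ_mem) (Eventually.of_forall hm) ?_ 
      (Continuous.aestronglyMeasurable (by fun_prop)) ?_ (integrableOn_exp_neg_Ioi 0) ?_).2
    · refine Integrable.mono' ((integrableOn_exp_neg_Ioi 0).const_mul |x|) (hm x) ?_
      filter_upwards [ae_restrict_mem measurableSet_Ioi] with t ht
      have ht : 0 < t := ht
      rw [Real.norm_eq_abs, abs_mul, Real.abs_exp, abs_div]
      refine mul_le_mul_of_nonneg_right ?_ (Real.exp_pos _).le
      rw [div_le_iff₀ (abs_pos.2 ht.ne'), mul_comm |x|]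
      exact abs_sin_mul_le t x
    · refine ae_of_all _ fun t y _ => ?_
      rw [Real.norm_eq_abs, abs_mul, Real.abs_exp]
      exact mul_le_of_le_one_left (Real.exp_pos _).le (Real.abs_cos_le_one _)
    · filter_upwards [ae_restrict_mem measurableSet_Ioi] with t ht y _
      have ht : 0 < t := ht
      have h0 : HasDerivAt (fun y : ℝ => t * y) t y := by
        simpa using (hasDerivAt_id y).const_mul t
      refine ((h0.sin.div_const t).mul_const (Real.exp (-t))).congr_deriv ?_
      field_simp
  have hg : ∀ x : ℝ, HasDerivAt (fun x => (∫ t in Set.Ioi (0:ℝ),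
      Real.sin (t * x) / t * Real.exp (-t)) - Real.arctan x) 0 x := fun x => by
    exact ((hd x).sub (Real.hasDerivAt_arctan x)).congr_deriv (sub_self _)
  have := is_const_of_deriv_eq_zero (fun x => (hg x).differentiableAt) (fun x => (hg x).deriv) l 0
  simp at this
  linarith

lemma Fnu_integrand_bound (ν lam t : ℝ) (ht : 0 < t) :
    ‖Real.sin (t * lam) * (t / (t ^ 2 + ν ^ 2)) * Real.exp (-t)‖ ≤ |lam| * Real.exp (-t) := by
  rw [Real.norm_eq_abs, abs_mul, Real.abs_exp, abs_mul]
  refine mul_le_mul_of_nonneg_right ?_ (Real.exp_pos _).le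
  have h1 : 0 < t ^ 2 + ν ^ 2 := by positivity
  rw [abs_of_pos (div_pos ht h1)]
  have h2 := abs_sin_mul_le t lam
  rw [abs_of_pos ht] at h2
  calc _ ≤ t * |lam| * (t / (t ^ 2 + ν ^ 2)) :=
        mul_le_mul_of_nonneg_right h2 (div_pos ht h1).le
    _ = |lam| * (t ^ 2 / (t ^ 2 + ν ^ 2)) := by ring
    _ ≤ |lam| * 1 := by
        refine mul_le_mul_of_nonneg_left ?_ (abs_nonneg _)
        rw [div_le_one h1]; nlinarith [sq_nonneg ν]
    _ = |lam| := mul_one _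

/-- **Lemma (properties of `F_ν`).** With
`F_ν(λ) = ∫₀^∞ sin(tλ) t/(t²+ν²) e^{-t} dt`, there is `C > 0` such that
`|F_ν(λ)| ≤ C|λ|` for all `ν > 0` and `λ ∈ ℝ`, and `F_ν(λ) → arctan λ` as `ν → 0⁺`
for every `λ`. -/
theorem statement8 :
    (∃ C : ℝ, 0 < C ∧ ∀ (ν lam : ℝ), 0 < ν → |Fnu ν lam| ≤ C * |lam|) ∧
    ∀ lam : ℝ, Tendsto (fun ν => Fnu ν lam) (𝓝[>] (0:ℝ)) (𝓝 (Real.arctan lam)) := by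
  have hI : ∀ lam : ℝ, Integrable (fun t : ℝ => |lam| * Real.exp (-t))
      (volume.restrict (Set.Ioi 0)) := fun lam => (integrableOn_exp_neg_Ioi 0).const_mul _
  refine ⟨⟨1, one_pos, fun ν lam _ => ?_⟩, fun lam => ?_⟩
  · have := norm_integral_le_of_norm_le (hI lam)
      ((ae_restrict_mem measurableSet_Ioi).mono fun t ht => Fnu_integrand_bound ν lam t ht)
    rw [integral_const_mul, integral_exp_neg_Ioi_zero] at this
    rw [one_mul]
    simpa [Fnu] using this
  · rw [← arctan_integral]
    unfold Fnu
    refine tendsto_integral_filter_of_dominated_convergence (fun t => |lam| * Real.exp (-t))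
      (Eventually.of_forall fun ν => Measurable.aestronglyMeasurable (by fun_prop))
      (Eventually.of_forall fun ν => (ae_restrict_mem measurableSet_Ioi).mono
        fun t ht => Fnu_integrand_bound ν lam t ht) (hI lam) ?_
    filter_upwards [ae_restrict_mem measurableSet_Ioi] with t ht
    have ht : 0 < t := ht
    have hc : ContinuousAt (fun ν : ℝ =>
        Real.sin (t * lam) * (t / (t ^ 2 + ν ^ 2)) * Real.exp (-t)) 0 := by
      have : t ^ 2 + (0:ℝ) ^ 2 ≠ 0 := by positivity
      fun_prop (disch := assumption)
    have h := hc.tendsto.mono_left (nhdsWithin_le_nhds (s := Set.Ioi 0))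
    convert h using 2
    field_simp
    simp [mul_comm]
end
end
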